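/- arXiv:1803.03588 — 2 statements merged into one kernel-verified Lean document; each statement's English description precedes it below -/
import Mathlib

section
/- There exists a constant C > 0 such that for every real d with 0 < d ≤ 1/4, setting δ = 2^{−C·(log(1/d))²/log log(1/d)}, every C₅-free graph G contains a subset X ⊆ V(G) with |X| ≥ δ·|V(G)| such that in one of the induced subgraph G[X] or the induced subgraph of the complement graph of G on X, every vertex has degree at most d·|X|. -/
open SimpleGraph
open scoped Classical

/-- `G` is `C₅`-free: no induced subgraph of `G` is isomorphic to the 5-cycle. -/
def C5Free {V : Type} (G : SimpleGraph V) : Prop :=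
  ¬ Nonempty (cycleGraph 5 ↪g G)

/-!
Call a set *sparse* if each of its vertices has only few neighbours in it, compared with the size
of the set, and write `L = log (1 / d)`. A *skew pair* of `T` consists of disjoint `A, B ⊆ T`, where
`A` is a `d ^ O(1)`-fraction and `B` a constant fraction of `T`, such that in `G` or in its
complement every vertex of `B` has degree at most `d * #A` into `A`.

*Skew pairs exist.* By Rödl's theorem, every set of vertices has a constant fraction which is
sparse in `G` or in its complement. Let `T` be sparse in `G` and without skew pairs, and let `v ∈ T`
have many neighbours `S` in `T`. Counting the 5-cycles `v a y t b` of which only the edge `ab` may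
be missing shows that any two large subsets of `S` contain large subsets that are complete to each
other. A sparse subset of `S` contains an induced 5-cycle then, so the constant fraction of a large
subset of `S` given by Rödl's theorem is sparse in the complement. If that fraction had no skew pair
either, the same argument in the complement would yield two large subsets of `S` without edges
between them, a contradiction. Hence all large subsets of `S` have skew pairs.

*Iterating skew pairs.* Following the large sides `B` for `k ≈ L` levels yields `k` small sides `A`,
each a `d ^ O(1)`-fraction of the original set. For a scale `s`, consider sets `U`, `W`, sparse on
average in `G` and in its complement respectively, with `K * s ^ 2 ≤ #U * #W`. Along the pairs
`(A, B)` such sets can be merged so that the values of `K` add up, hence one round of the iteration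
multiplies `K` by `k`, while the sets shrink by a factor `d ^ O(1)`. After `t ≈ L / log L` rounds
`K = k ^ t ≥ d ^ (-2)`, whence `U` or `W` has at least `s / d` vertices and is as sparse as desired.
The total loss is `d ^ O(t) = 2 ^ (-O(L ^ 2 / log L))`.
-/

section Development

open Finset

universe u

variable {V : Type u} {G : SimpleGraph V}

/-- The neighbourhood of `v` in `G`, restricted to `X`. Its cardinality is the degree of `v` into
`X`. -/
noncomputable def nbhdIn (G : SimpleGraph V) (v : V) (X : Finset V) : Finset V :=
  {u ∈ X | G.Adj v u}

lemma mem_nbhdIn {u v : V} {X : Finset V} : u ∈ nbhdIn G v X ↔ u ∈ X ∧ G.Adj v u := mem_filter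

lemma nbhdIn_subset (G : SimpleGraph V) (v : V) (X : Finset V) : nbhdIn G v X ⊆ X :=
  filter_subset _ _

lemma nbhdIn_mono (G : SimpleGraph V) (v : V) {X Y : Finset V} (h : X ⊆ Y) :
    nbhdIn G v X ⊆ nbhdIn G v Y :=
  filter_subset_filter _ h

lemma card_nbhdIn_mono (G : SimpleGraph V) (v : V) {X Y : Finset V} (h : X ⊆ Y) :
    #(nbhdIn G v X) ≤ #(nbhdIn G v Y) :=
  card_le_card (nbhdIn_mono G v h)

lemma nbhdIn_inter_nbhdIn (G : SimpleGraph V) (u w : V) (X : Finset V) :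
    nbhdIn G u X ∩ nbhdIn G w X = nbhdIn G w (nbhdIn G u X) := by
  ext x
  simp only [mem_inter, mem_nbhdIn]
  tauto

lemma sum_card_nbhdIn_comm (G : SimpleGraph V) (A B : Finset V) :
    ∑ a ∈ A, #(nbhdIn G a B) = ∑ b ∈ B, #(nbhdIn G b A) := by
  simpa only [bipartiteAbove, bipartiteBelow, nbhdIn, G.adj_comm] using
    sum_card_bipartiteAbove_eq_sum_card_bipartiteBelow (s := A) (t := B) G.Adj

lemma card_interedges_eq_sum_card_nbhdIn (G : SimpleGraph V) (A B : Finset V) :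
    #(G.interedges A B) = ∑ a ∈ A, #(nbhdIn G a B) := by
  simp only [interedges_def, nbhdIn, card_filter, sum_product]

/-- Every vertex of `B` has degree at most `d * #A` into `A`. In particular `SparseTo G d X X` says
that `G[X]` has maximum degree at most `d * #X`. -/
def SparseTo (G : SimpleGraph V) (d : ℝ) (A B : Finset V) : Prop :=
  ∀ b ∈ B, (#(nbhdIn G b A) : ℝ) ≤ d * #A

/-- The vertices of `B` whose degree into `A` is less than `d * #A`. -/
noncomputable def lowDegIn (G : SimpleGraph V) (d : ℝ) (A B : Finset V) : Finset V :=
  {b ∈ B | (#(nbhdIn G b A) : ℝ) < d * #A}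

lemma lowDegIn_subset (G : SimpleGraph V) (d : ℝ) (A B : Finset V) : lowDegIn G d A B ⊆ B :=
  filter_subset _ _

lemma sparseTo_lowDegIn (G : SimpleGraph V) (d : ℝ) (A B : Finset V) :
    SparseTo G d A (lowDegIn G d A B) :=
  fun _ hb ↦ (mem_filter.1 hb).2.le

lemma mul_card_le_of_notMem_lowDegIn {d : ℝ} {A B : Finset V} {b : V} (hb : b ∈ B)
    (h : b ∉ lowDegIn G d A B) : d * #A ≤ #(nbhdIn G b A) :=
  not_lt.1 fun hlt ↦ h (mem_filter.2 ⟨hb, hlt⟩)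

lemma sub_mul_le_sum_card_nbhdIn (G : SimpleGraph V) (d : ℝ) (A B : Finset V) :
    ((#B : ℝ) - #(lowDegIn G d A B)) * (d * #A) ≤ ∑ b ∈ B, (#(nbhdIn G b A) : ℝ) := by
  have hcard : (#(B \ lowDegIn G d A B) : ℝ) = #B - #(lowDegIn G d A B) :=
    cast_card_sdiff (lowDegIn_subset G d A B)
  calc ((#B : ℝ) - #(lowDegIn G d A B)) * (d * #A)
      = #(B \ lowDegIn G d A B) • (d * #A : ℝ) := by rw [← hcard, nsmul_eq_mul]
    _ ≤ ∑ b ∈ B \ lowDegIn G d A B, (#(nbhdIn G b A) : ℝ) :=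
        card_nsmul_le_sum _ _ _ fun b hb ↦
          mul_card_le_of_notMem_lowDegIn (mem_sdiff.1 hb).1 (mem_sdiff.1 hb).2
    _ ≤ ∑ b ∈ B, (#(nbhdIn G b A) : ℝ) :=
        sum_le_sum_of_subset_of_nonneg sdiff_subset fun _ _ _ ↦ by positivity

lemma cast_card_union_le (A B : Finset V) : (#(A ∪ B) : ℝ) ≤ #A + #B := by
  exact_mod_cast card_union_le A B

lemma sum_card_common_nbhdIn (G : SimpleGraph V) (A N₁ N₂ : Finset V) :
    ∑ z ∈ N₁ ×ˢ N₂, #(nbhdIn G z.2 (nbhdIn G z.1 A)) =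
      ∑ t ∈ A, #(nbhdIn G t N₁) * #(nbhdIn G t N₂) := by
  convert sum_card_bipartiteAbove_eq_sum_card_bipartiteBelow (s := N₁ ×ˢ N₂) (t := A)
    (fun z t ↦ G.Adj t z.1 ∧ G.Adj t z.2) using 3
  · ext t
    simp only [mem_nbhdIn, mem_bipartiteAbove, G.adj_comm t, and_assoc]
  · rw [← card_product]
    congr 1
    ext z
    simp only [mem_product, mem_nbhdIn, mem_bipartiteBelow]
    tauto

lemma mul_le_sum_card_common_nbhdIn {d : ℝ} (hd : 0 ≤ d) {A N₁ N₂ : Finset V}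
    (hdeg₁ : ∀ t ∈ A, d * #N₁ ≤ #(nbhdIn G t N₁)) (hdeg₂ : ∀ t ∈ A, d * #N₂ ≤ #(nbhdIn G t N₂)) :
    #A * (d * #N₁ * (d * #N₂)) ≤
      ∑ z ∈ N₁ ×ˢ N₂, (#(nbhdIn G z.2 (nbhdIn G z.1 A)) : ℝ) := by
  rw [← Nat.cast_sum, sum_card_common_nbhdIn, ← nsmul_eq_mul]
  push_cast
  exact card_nsmul_le_sum _ _ _ fun t ht ↦
    mul_le_mul (hdeg₁ t ht) (hdeg₂ t ht) (by positivity) (by positivity)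

/-- The vertices of `A` adjacent neither to `b` nor to `x`. -/
noncomputable def commonNonNbhdIn (G : SimpleGraph V) (b x : V) (A : Finset V) : Finset V :=
  A \ (nbhdIn G b A ∪ nbhdIn G x A)

lemma sum_card_interedges_common (G : SimpleGraph V) (top bot N₁ N₂ : Finset V) :
    ∑ z ∈ N₁ ×ˢ N₂, #(G.interedges (commonNonNbhdIn G z.1 z.2 top)
        (nbhdIn G z.2 (nbhdIn G z.1 bot))) =
      ∑ e ∈ G.interedges top bot, #(nbhdIn G e.2 N₁ \ nbhdIn G e.1 N₁) *
        #(nbhdIn G e.2 N₂ \ nbhdIn G e.1 N₂) := by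
  convert sum_card_bipartiteAbove_eq_sum_card_bipartiteBelow (s := N₁ ×ˢ N₂)
    (t := G.interedges top bot) (fun z e ↦ (G.Adj e.2 z.1 ∧ ¬ G.Adj e.1 z.1) ∧
      (G.Adj e.2 z.2 ∧ ¬ G.Adj e.1 z.2)) using 3 with z
  · ext e
    simp only [mem_interedges_iff, commonNonNbhdIn, mem_sdiff, mem_union, mem_nbhdIn,
      mem_bipartiteAbove, G.adj_comm z.1, G.adj_comm z.2]
    tauto
  · rw [← card_product]
    congr 1
    ext z
    simp only [mem_product, mem_sdiff, mem_nbhdIn, mem_bipartiteBelow]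
    tauto

/-- `G` is spread over `T`: for every `A ⊆ T` with at least `p * #T` vertices, fewer than `#T / 50`
of the remaining vertices of `T` have degree less than `d * #A` into `A`. -/
def IsSpread (G : SimpleGraph V) (p d : ℝ) (T : Finset V) : Prop :=
  ∀ A ⊆ T, p * #T ≤ #A → (#(lowDegIn G d A (T \ A)) : ℝ) < #T / 50

section IsSpread

variable {p d : ℝ} {T : Finset V}

lemma IsSpread.mul_le_card_interedges (h : IsSpread G p d T) (hd : 0 ≤ d) {A B : Finset V}
    (hA : A ⊆ T) (hB : B ⊆ T) (hAB : Disjoint A B) (hp : p * #T ≤ #A) :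
    ((#B : ℝ) - #T / 50) * (d * #A) ≤ #(G.interedges B A) := by
  have hlow : (#(lowDegIn G d A B) : ℝ) ≤ #T / 50 := by
    have hsub : lowDegIn G d A B ⊆ lowDegIn G d A (T \ A) :=
      filter_subset_filter _ (subset_sdiff.2 ⟨hB, hAB.symm⟩)
    exact (Nat.cast_le.2 (card_le_card hsub)).trans (h A hA hp).le
  calc ((#B : ℝ) - #T / 50) * (d * #A)
      ≤ ((#B : ℝ) - #(lowDegIn G d A B)) * (d * #A) := by gcongr
    _ ≤ ∑ b ∈ B, (#(nbhdIn G b A) : ℝ) := sub_mul_le_sum_card_nbhdIn G d A B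
    _ = #(G.interedges B A) := by
        rw [card_interedges_eq_sum_card_nbhdIn, Nat.cast_sum]

lemma card_sub_le_card_commonNonNbhdIn {c : ℝ} (hsparse : SparseTo G c T T) {A : Finset V}
    (hA : A ⊆ T) {b x : V} (hb : b ∈ T) (hx : x ∈ T) :
    (#A : ℝ) - 2 * (c * #T) ≤ #(commonNonNbhdIn G b x A) := by
  have hdeg : ∀ v ∈ T, (#(nbhdIn G v A) : ℝ) ≤ c * #T := fun v hv ↦
    (Nat.cast_le.2 (card_nbhdIn_mono G v hA)).trans (hsparse v hv)
  have hsdiff : (#A : ℝ) ≤ #(commonNonNbhdIn G b x A) + #(nbhdIn G b A ∪ nbhdIn G x A) := by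
    exact_mod_cast card_le_card_sdiff_add_card
  linarith [cast_card_union_le (nbhdIn G b A) (nbhdIn G x A), hdeg b hb, hdeg x hx]

lemma IsSpread.mul_le_card_interedges_common (h : IsSpread G p d T) (hd : 0 ≤ d) (hp : 0 ≤ p)
    (hsparse : SparseTo G (1 / 200) T T) {bot top : Finset V} (hbot : bot ⊆ T) (htop : top ⊆ T)
    (hdisj : Disjoint bot top) (hcard : (#T : ℝ) / 4 ≤ #top) {b x : V} (hb : b ∈ T) (hx : x ∈ T) :
    #T * d / 16 * ((#(nbhdIn G x (nbhdIn G b bot)) : ℝ) - p * #T) ≤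
      #(G.interedges (commonNonNbhdIn G b x top) (nbhdIn G x (nbhdIn G b bot))) := by
  set X := nbhdIn G x (nbhdIn G b bot)
  set Y := commonNonNbhdIn G b x top
  have hX : X ⊆ bot := (nbhdIn_subset _ _ _).trans (nbhdIn_subset _ _ _)
  have hY : Y ⊆ top := sdiff_subset
  obtain hsmall | hlarge := lt_or_ge (#X : ℝ) (p * #T)
  · exact (mul_nonpos_of_nonneg_of_nonpos (by positivity) (by linarith)).trans (by positivity)
  have hYcard : (#T : ℝ) / 16 ≤ #Y - #T / 50 := by
    linarith [card_sub_le_card_commonNonNbhdIn hsparse htop hb hx, Nat.cast_nonneg (α := ℝ) #T]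
  calc #T * d / 16 * ((#X : ℝ) - p * #T)
      ≤ #T * d / 16 * #X := by
        gcongr
        exact sub_le_self _ (by positivity)
    _ = #T / 16 * (d * #X) := by ring
    _ ≤ ((#Y : ℝ) - #T / 50) * (d * #X) := by gcongr
    _ ≤ #(G.interedges Y X) :=
        h.mul_le_card_interedges hd (hX.trans hbot) (hY.trans htop) (hdisj.mono hX hY) hlarge

lemma IsSpread.exists_adj_mul_le_private (h : IsSpread G p d T) (hd : 0 < d) (hp : 0 ≤ p)
    (hpd : p ≤ d ^ 2 / 8) (hsparse : SparseTo G (1 / 200) T T) {bot top N₁ N₂ : Finset V}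
    (hbot : bot ⊆ T) (htop : top ⊆ T) (hdisj : Disjoint bot top) (hbotcard : (#T : ℝ) / 4 ≤ #bot)
    (htopcard : (#T : ℝ) / 4 ≤ #top) (hN₁ : N₁ ⊆ T) (hN₂ : N₂ ⊆ T) (hN₁' : N₁.Nonempty)
    (hN₂' : N₂.Nonempty) (hdeg₁ : ∀ t ∈ bot, d * #N₁ ≤ #(nbhdIn G t N₁))
    (hdeg₂ : ∀ t ∈ bot, d * #N₂ ≤ #(nbhdIn G t N₂)) :
    ∃ y ∈ top, ∃ t ∈ bot, G.Adj y t ∧ d ^ 3 / 200 * (#N₁ * #N₂) ≤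
      (#(nbhdIn G t N₁ \ nbhdIn G y N₁) : ℝ) * #(nbhdIn G t N₂ \ nbhdIn G y N₂) := by
  by_contra! hsmall
  have hT : T.Nonempty := hN₁'.mono hN₁
  have hupper : (∑ e ∈ G.interedges top bot, (#(nbhdIn G e.2 N₁ \ nbhdIn G e.1 N₁) : ℝ) *
      #(nbhdIn G e.2 N₂ \ nbhdIn G e.1 N₂)) ≤ #T * #T * (d ^ 3 / 200 * (#N₁ * #N₂)) := by
    have hedges : (#(G.interedges top bot) : ℝ) ≤ #T * #T := by
      exact_mod_cast (G.card_interedges_le_mul top bot).trans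
        (Nat.mul_le_mul (card_le_card htop) (card_le_card hbot))
    refine (sum_le_card_nsmul _ _ (d ^ 3 / 200 * (#N₁ * #N₂)) fun e he ↦ ?_).trans ?_
    · obtain ⟨hy, ht, hadj⟩ := G.mem_interedges_iff.1 he
      exact (hsmall _ hy _ ht hadj).le
    · rw [nsmul_eq_mul]
      gcongr
  have hcommon : #T / 4 * (d * #N₁ * (d * #N₂)) ≤
      ∑ z ∈ N₁ ×ˢ N₂, (#(nbhdIn G z.2 (nbhdIn G z.1 bot)) : ℝ) := by
    refine le_trans ?_ (mul_le_sum_card_common_nbhdIn hd.le hdeg₁ hdeg₂)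
    gcongr
  have hlower := sum_le_sum fun z (hz : z ∈ N₁ ×ˢ N₂) ↦
    h.mul_le_card_interedges_common hd.le hp hsparse hbot htop hdisj htopcard
      (hN₁ (mem_product.1 hz).1) (hN₂ (mem_product.1 hz).2)
  have hcount := sum_card_interedges_common G top bot N₁ N₂
  rw [← Nat.cast_sum, hcount, Nat.cast_sum, ← mul_sum, sum_sub_distrib, sum_const, card_product,
    nsmul_eq_mul] at hlower
  push_cast at hlower
  have hP : 0 < d * (#T * #T) * (#N₁ * #N₂) := by positivity
  have hle : #T * d / 16 * (#T / 4 * (d * #N₁ * (d * #N₂)) - #N₁ * #N₂ * (d ^ 2 / 8 * #T)) ≤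
      #T * #T * (d ^ 3 / 200 * (#N₁ * #N₂)) := by
    refine le_trans ?_ (hlower.trans hupper)
    gcongr
  nlinarith [mul_pos hP (pow_pos hd 2)]

end IsSpread

lemma exists_lower_layer {α : Type*} [LinearOrder α] (S : Finset V) (f : V → α) {n : ℕ}
    (hn : n ≤ #S) : ∃ L ⊆ S, #L = n ∧ ∀ u ∈ L, ∀ w ∈ S \ L, f u ≤ f w := by
  induction n with
  | zero => exact ⟨∅, by simp⟩
  | succ n ih =>
    obtain ⟨L, hLS, hLcard, hL⟩ := ih (by lia)
    have hne : (S \ L).Nonempty := sdiff_nonempty.2 fun hSL ↦ by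
      have := card_le_card hSL
      lia
    obtain ⟨m, hm, hmin⟩ := exists_min_image (S \ L) f hne
    obtain ⟨hmS, hmL⟩ := mem_sdiff.1 hm
    refine ⟨insert m L, insert_subset hmS hLS, by rw [card_insert_of_notMem hmL, hLcard], ?_⟩
    rintro u hu w hw
    have hw' : w ∈ S \ L := sdiff_subset_sdiff Subset.rfl (subset_insert m L) hw
    obtain rfl | huL := mem_insert.1 hu
    · exact hmin w hw'
    · exact hL u huL w hw'

lemma exists_lower_half {α : Type*} [LinearOrder α] (S : Finset V) (f : V → α) :
    ∃ L ⊆ S, ((#S : ℝ) - 1) / 2 ≤ #L ∧ (#S : ℝ) / 2 ≤ #(S \ L) ∧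
      ∀ u ∈ L, ∀ w ∈ S \ L, f u ≤ f w := by
  obtain ⟨L, hLS, hLcard, hL⟩ := exists_lower_layer S f (Nat.div_le_self #S 2)
  have hLlow : (#S : ℝ) ≤ 2 * #L + 1 := by exact_mod_cast (by lia : #S ≤ 2 * #L + 1)
  have hLhigh : 2 * (#L : ℝ) ≤ #S := by exact_mod_cast (by lia : 2 * #L ≤ #S)
  refine ⟨L, hLS, by linarith, ?_, hL⟩
  rw [cast_card_sdiff hLS]
  linarith

/-- `G` has no induced 5-cycle, spelled out on five vertices. -/
def NoInducedC5 (G : SimpleGraph V) : Prop :=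
  ∀ a b c d e : V, G.Adj a b → G.Adj b c → G.Adj c d → G.Adj d e → G.Adj e a →
    ¬ G.Adj a c → ¬ G.Adj b d → ¬ G.Adj c e → ¬ G.Adj d a → ¬ G.Adj e b → False

lemma noInducedC5_of_isEmpty (h : IsEmpty (cycleGraph 5 ↪g G)) : NoInducedC5 G := by
  intro a b c d e hab hbc hcd hde hea hac hbd hce hda heb
  have hadj : ∀ i j, G.Adj (![a, b, c, d, e] i) (![a, b, c, d, e] j) ↔ (cycleGraph 5).Adj i j := by
    intro i j
    fin_cases i <;> fin_cases j <;> first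
      | exact iff_of_false G.irrefl (by decide)
      | exact iff_of_true (by assumption) (by decide)
      | exact iff_of_true (Adj.symm (by assumption)) (by decide)
      | exact iff_of_false (by assumption) (by decide)
      | exact iff_of_false (mt Adj.symm (by assumption)) (by decide)
  have htwin : ∀ i j : Fin 5, (∀ k, (cycleGraph 5).Adj i k ↔ (cycleGraph 5).Adj j k) → i = j := by
    decide
  refine h.elim ⟨⟨![a, b, c, d, e], fun i j hij ↦ htwin i j fun k ↦ ?_⟩, hadj _ _⟩
  rw [← hadj, ← hadj, hij]

lemma NoInducedC5.compl (h : NoInducedC5 G) : NoInducedC5 Gᶜ := by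
  intro a b c d e hab hbc hcd hde hea hac hbd hce hda heb
  have hne_ac : a ≠ c := by rintro rfl; exact hce hea.symm
  have hne_bd : b ≠ d := by rintro rfl; exact hda hab.symm
  have hne_ce : c ≠ e := by rintro rfl; exact hac hea.symm
  have hne_da : d ≠ a := by rintro rfl; exact hbd hab.symm
  have hne_eb : e ≠ b := by rintro rfl; exact hbd hde.symm
  simp only [compl_adj, not_and, not_not] at *
  exact h a c e b d (hac hne_ac) (hce hne_ce) (heb hne_eb) (hbd hne_bd) (hda hne_da)
    (mt Adj.symm hea.2) (mt Adj.symm hbc.2) (mt Adj.symm hde.2) (mt Adj.symm hab.2)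
    (mt Adj.symm hcd.2)

/-- Any two subsets `N₁`, `N₂` of `S` with at least `q` vertices contain `A ⊆ N₁` and `B ⊆ N₂`,
complete to each other in `G`, whose product occupies an `η`-fraction of `N₁ × N₂`. -/
def HasCompletePairs (G : SimpleGraph V) (η q : ℝ) (S : Finset V) : Prop :=
  ∀ N₁ ⊆ S, ∀ N₂ ⊆ S, q ≤ #N₁ → q ≤ #N₂ → ∃ A ⊆ N₁, ∃ B ⊆ N₂,
    η * (#N₁ * #N₂) ≤ (#A : ℝ) * #B ∧ ∀ a ∈ A, ∀ b ∈ B, G.Adj a b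

lemma card_sdiff_nbhdIn_le_of_card_le {y t : V} {N : Finset V}
    (h : #(nbhdIn G t N) ≤ #(nbhdIn G y N)) :
    #(nbhdIn G t N \ nbhdIn G y N) ≤ #(nbhdIn G y N \ nbhdIn G t N) := by
  have ht := card_sdiff_add_card_inter (nbhdIn G t N) (nbhdIn G y N)
  have hy := card_sdiff_add_card_inter (nbhdIn G y N) (nbhdIn G t N)
  rw [inter_comm] at hy
  lia

/-- The non-neighbours `t ≠ v` of `v` in `T` with degree at least `d * #N₁` into `N₁` and at least
`d * #N₂` into `N₂`: the candidates for the two vertices opposite `v` in a 5-cycle. -/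
noncomputable def richNonNbrs (G : SimpleGraph V) (d : ℝ) (v : V) (N₁ N₂ T : Finset V) :
    Finset V :=
  {t ∈ T | t ≠ v ∧ ¬ G.Adj v t ∧ d * #N₁ ≤ (#(nbhdIn G t N₁) : ℝ) ∧
    d * #N₂ ≤ (#(nbhdIn G t N₂) : ℝ)}

section RichNonNbrs

variable {p d : ℝ} {v : V} {N₁ N₂ T : Finset V}

lemma IsSpread.card_div_two_add_one_le_card_richNonNbrs (h : IsSpread G p d T)
    (hsparse : SparseTo G (1 / 200) T T) (hT : (8 : ℝ) ≤ #T) (hv : v ∈ T)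
    (hN₁ : N₁ ⊆ nbhdIn G v T) (hN₂ : N₂ ⊆ nbhdIn G v T)
    (hcard₁ : p * #T ≤ #N₁) (hcard₂ : p * #T ≤ #N₂) :
    (#T : ℝ) / 2 + 1 ≤ #(richNonNbrs G d v N₁ N₂ T) := by
  set R := richNonNbrs G d v N₁ N₂ T
  set L₁ := lowDegIn G d N₁ (T \ N₁)
  set L₂ := lowDegIn G d N₂ (T \ N₂)
  have hcover : T ⊆ R ∪ {v} ∪ nbhdIn G v T ∪ L₁ ∪ L₂ := by
    intro t ht
    by_contra hcon
    simp only [mem_union, mem_singleton, not_or] at hcon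
    obtain ⟨⟨⟨⟨htR, htv⟩, hvt⟩, ht₁⟩, ht₂⟩ := hcon
    exact htR <| mem_filter.2 ⟨ht, htv, fun hadj ↦ hvt (mem_nbhdIn.2 ⟨ht, hadj⟩),
      mul_card_le_of_notMem_lowDegIn (mem_sdiff.2 ⟨ht, fun h ↦ hvt (hN₁ h)⟩) ht₁,
      mul_card_le_of_notMem_lowDegIn (mem_sdiff.2 ⟨ht, fun h ↦ hvt (hN₂ h)⟩) ht₂⟩
  have hcard : (#T : ℝ) ≤ #R + 1 + #(nbhdIn G v T) + #L₁ + #L₂ := by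
    have h₁ := cast_card_union_le (R ∪ {v} ∪ nbhdIn G v T ∪ L₁) L₂
    have h₂ := cast_card_union_le (R ∪ {v} ∪ nbhdIn G v T) L₁
    have h₃ := cast_card_union_le (R ∪ {v}) (nbhdIn G v T)
    have h₄ := cast_card_union_le R {v}
    rw [card_singleton, Nat.cast_one] at h₄
    linarith [(Nat.cast_le (α := ℝ)).2 (card_le_card hcover)]
  have hL₁ : (#L₁ : ℝ) < #T / 50 := h N₁ (hN₁.trans (nbhdIn_subset G v T)) hcard₁
  have hL₂ : (#L₂ : ℝ) < #T / 50 := h N₂ (hN₂.trans (nbhdIn_subset G v T)) hcard₂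
  linarith [hsparse v hv]

/-- If `t`, `y` are adjacent non-neighbours of `v` and `deg t ≤ deg y` into `N₁`, then
`N(y) \ N(t)` in `N₁` is at least as large as `N(t) \ N(y)`, and it is complete to `N(t) \ N(y)` in
`N₂`, since a missing edge `ab` would give the induced 5-cycle `v a y t b`. -/
theorem IsSpread.hasCompletePairs (h : IsSpread G p d T) (hC : NoInducedC5 G)
    (hsparse : SparseTo G (1 / 200) T T) (hd : 0 < d) (hd1 : d ≤ 1) (hpd : p ≤ d ^ 2 / 8)
    (hpT : 1 ≤ p * #T) (hv : v ∈ T) :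
    HasCompletePairs G (d ^ 3 / 200) (p * #T) (nbhdIn G v T) := by
  intro N₁ hN₁ N₂ hN₂ hcard₁ hcard₂
  have hp : 0 ≤ p := (pos_of_mul_pos_left (one_pos.trans_le hpT) (Nat.cast_nonneg _)).le
  have hT : (8 : ℝ) ≤ #T := by
    nlinarith [Nat.cast_nonneg (α := ℝ) #T, pow_le_one₀ hd.le hd1 (n := 2)]
  have hRcard := h.card_div_two_add_one_le_card_richNonNbrs hsparse hT hv hN₁ hN₂ hcard₁ hcard₂
  have hsub : nbhdIn G v T ⊆ T := nbhdIn_subset G v T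
  have hRT : richNonNbrs G d v N₁ N₂ T ⊆ T := filter_subset _ _
  obtain ⟨bot, hbot, hbotcard, htopcard, hdeg⟩ :=
    exists_lower_half (richNonNbrs G d v N₁ N₂ T) fun t ↦ #(nbhdIn G t N₁)
  have hrich : ∀ t ∈ bot, d * #N₁ ≤ (#(nbhdIn G t N₁) : ℝ) ∧ d * #N₂ ≤ (#(nbhdIn G t N₂) : ℝ) :=
    fun t ht ↦ (mem_filter.1 (hbot ht)).2.2.2
  have hne {N : Finset V} (hN : p * #T ≤ #N) : N.Nonempty :=
    card_pos.1 (Nat.cast_pos.1 (one_pos.trans_le (hpT.trans hN)))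
  obtain ⟨y, hy, t, ht, hyt, hlarge⟩ := h.exists_adj_mul_le_private hd hp hpd hsparse
    (hbot.trans hRT) (sdiff_subset.trans hRT) disjoint_sdiff (by linarith) (by linarith)
    (hN₁.trans hsub) (hN₂.trans hsub) (hne hcard₁) (hne hcard₂)
    (fun t ht ↦ (hrich t ht).1) (fun t ht ↦ (hrich t ht).2)
  refine ⟨nbhdIn G y N₁ \ nbhdIn G t N₁, sdiff_subset.trans (nbhdIn_subset _ _ _),
    nbhdIn G t N₂ \ nbhdIn G y N₂, sdiff_subset.trans (nbhdIn_subset _ _ _),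
    hlarge.trans ?_, fun a ha b hb ↦ ?_⟩
  · exact mul_le_mul_of_nonneg_right (Nat.cast_le.2 (card_sdiff_nbhdIn_le_of_card_le
      (hdeg t ht y hy))) (Nat.cast_nonneg _)
  · simp only [mem_sdiff, mem_nbhdIn, not_and] at ha hb
    obtain ⟨⟨haN, hya⟩, hta⟩ := ha
    obtain ⟨⟨hbN, htb⟩, hyb⟩ := hb
    by_contra hab
    have hvy : ¬ G.Adj v y := (mem_filter.1 (sdiff_subset hy)).2.2.1
    have hvt : ¬ G.Adj v t := (mem_filter.1 (hbot ht)).2.2.1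
    exact hC v a y t b (mem_nbhdIn.1 (hN₁ haN)).2 hya.symm hyt htb (mem_nbhdIn.1 (hN₂ hbN)).2.symm
      hvy (fun h ↦ hta haN h.symm) (hyb hbN) (fun h ↦ hvt h.symm) (fun h ↦ hab h.symm)

end RichNonNbrs

lemma exists_four_layers {α : Type*} [LinearOrder α] (S : Finset V) (f : V → α) :
    ∃ L : Fin 4 → Finset V, (∀ i, L i ⊆ S) ∧ (∀ i, ((#S : ℝ) - 3) / 4 ≤ #(L i)) ∧
      ∀ i j, i < j → ∀ u ∈ L i, ∀ w ∈ L j, f u ≤ f w := by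
  obtain ⟨A, hAS, hAcard, hAcard', hA⟩ := exists_lower_half S f
  obtain ⟨B, hBA, hBcard, hBcard', hB⟩ := exists_lower_half A f
  obtain ⟨C, hCA, hCcard, hCcard', hC⟩ := exists_lower_half (S \ A) f
  have hAC {u w : V} (hu : u ∈ A) (hw : w ∈ S \ A) : f u ≤ f w := hA u hu w hw
  refine ⟨![B, A \ B, C, (S \ A) \ C], fun i ↦ ?_, fun i ↦ ?_, fun i j hij u hu w hw ↦ ?_⟩
  · fin_cases i
    exacts [hBA.trans hAS, sdiff_subset.trans hAS, hCA.trans sdiff_subset,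
      sdiff_subset.trans sdiff_subset]
  · fin_cases i <;> simp only [Fin.reduceFinMk, Matrix.cons_val] <;> linarith
  · fin_cases i <;> fin_cases j <;> first
      | exact absurd hij (by decide)
      | exact hB u hu w hw
      | exact hC u hu w hw
      | exact hAC (hBA hu) (hCA hw)
      | exact hAC (hBA hu) (mem_sdiff.1 hw).1
      | exact hAC (mem_sdiff.1 hu).1 (hCA hw)
      | exact hAC (mem_sdiff.1 hu).1 (mem_sdiff.1 hw).1

section HasCompletePairs

variable {η q : ℝ} {S : Finset V}

lemma HasCompletePairs.anti {S' : Finset V} (h : HasCompletePairs G η q S) (hS' : S' ⊆ S) :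
    HasCompletePairs G η q S' :=
  fun N₁ hN₁ N₂ hN₂ ↦ h N₁ (hN₁.trans hS') N₂ (hN₂.trans hS')

lemma HasCompletePairs.exists_adj (h : HasCompletePairs G η q S) (hη : 0 < η) (hq : 0 < q)
    {A B : Finset V} (hA : A ⊆ S) (hB : B ⊆ S) (hAq : q ≤ #A) (hBq : q ≤ #B) :
    ∃ a ∈ A, ∃ b ∈ B, G.Adj a b := by
  obtain ⟨A', hA', B', hB', hle, hadj⟩ := h A hA B hB hAq hBq
  have hpos : (0 : ℝ) < #A' * #B' :=
    (mul_pos hη (mul_pos (hq.trans_le hAq) (hq.trans_le hBq))).trans_le hle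
  have hpos' : 0 < #A' * #B' := by exact_mod_cast hpos
  obtain ⟨a, ha⟩ := card_pos.1 (Nat.pos_of_mul_pos_right hpos')
  obtain ⟨b, hb⟩ := card_pos.1 (Nat.pos_of_mul_pos_left hpos')
  exact ⟨a, hA' ha, b, hB' hb, hadj a ha b hb⟩

lemma HasCompletePairs.card_lowDegIn_lt (h : HasCompletePairs G η q S) (hη : 0 < η) (hq : 0 < q)
    {N : Finset V} (hN : N ⊆ S) (hNq : q ≤ #N) : (#(lowDegIn G η N S) : ℝ) < q := by
  by_contra! hlow
  obtain ⟨A, hA, B, hB, hle, hadj⟩ := h _ (lowDegIn_subset G η N S) N hN hlow hNq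
  have hpos : (0 : ℝ) < #A * #B :=
    (mul_pos hη (mul_pos (hq.trans_le hlow) (hq.trans_le hNq))).trans_le hle
  obtain ⟨a, ha⟩ : A.Nonempty := card_pos.1 <| Nat.cast_pos.1 <|
    pos_of_mul_pos_left hpos (Nat.cast_nonneg #B)
  have hBdeg : (#B : ℝ) < η * #N := by
    have hBN : B ⊆ nbhdIn G a N := fun b hb ↦ mem_nbhdIn.2 ⟨hB hb, hadj a ha b hb⟩
    exact (Nat.cast_le.2 (card_le_card hBN)).trans_lt (mem_filter.1 (hA ha)).2
  have hAcard : (#A : ℝ) ≤ #(lowDegIn G η N S) := Nat.cast_le.2 (card_le_card hA)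
  have hApos : (0 : ℝ) < #A := Nat.cast_pos.2 (card_pos.2 ⟨a, ha⟩)
  nlinarith [mul_lt_mul_of_pos_left hBdeg hApos,
    mul_le_mul_of_nonneg_right hAcard (mul_pos hη (hq.trans_le hNq)).le]

/-- The vertices of `S` that are adjacent to `z` or share with `z` more than an eighth of its
neighbours in `S`. -/
noncomputable def nearSet (G : SimpleGraph V) (S : Finset V) (z : V) : Finset V :=
  {x ∈ S | G.Adj z x ∨ (#(nbhdIn G z S) : ℝ) / 8 < #(nbhdIn G x (nbhdIn G z S))}

lemma card_filter_lt_codegree_le (hsparse : SparseTo G (1 / 200) S S) {z : V}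
    (hz : (0 : ℝ) < #(nbhdIn G z S)) :
    (#{x ∈ S | (#(nbhdIn G z S) : ℝ) / 8 < #(nbhdIn G x (nbhdIn G z S))} : ℝ) ≤ #S / 25 := by
  set F : Finset V := {x ∈ S | (#(nbhdIn G z S) : ℝ) / 8 < #(nbhdIn G x (nbhdIn G z S))}
  have hcount : (#F : ℝ) * (#(nbhdIn G z S) / 8) ≤ #(nbhdIn G z S) * (1 / 200 * #S) :=
    calc (#F : ℝ) * (#(nbhdIn G z S) / 8)
        ≤ ∑ x ∈ F, (#(nbhdIn G x (nbhdIn G z S)) : ℝ) := by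
          rw [← nsmul_eq_mul]
          exact card_nsmul_le_sum _ _ _ fun x hx ↦ (mem_filter.1 hx).2.le
      _ = ∑ y ∈ nbhdIn G z S, (#(nbhdIn G y F) : ℝ) := by
          exact_mod_cast sum_card_nbhdIn_comm G F (nbhdIn G z S)
      _ ≤ #(nbhdIn G z S) * (1 / 200 * #S) := by
          rw [← nsmul_eq_mul]
          exact sum_le_card_nsmul _ _ _ fun y hy ↦
            (Nat.cast_le.2 (card_nbhdIn_mono G y (filter_subset _ S))).trans
              (hsparse y (nbhdIn_subset G z S hy))
  nlinarith

lemma card_nearSet_le (hsparse : SparseTo G (1 / 200) S S) {z : V} (hzS : z ∈ S)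
    (hz : (0 : ℝ) < #(nbhdIn G z S)) : (#(nearSet G S z) : ℝ) ≤ #S / 20 := by
  have hunion := cast_card_union_le (nbhdIn G z S)
    {x ∈ S | (#(nbhdIn G z S) : ℝ) / 8 < #(nbhdIn G x (nbhdIn G z S))}
  have hnear : nearSet G S z = nbhdIn G z S ∪
      {x ∈ S | (#(nbhdIn G z S) : ℝ) / 8 < #(nbhdIn G x (nbhdIn G z S))} := filter_or _ _ _
  rw [← hnear] at hunion
  linarith [hsparse z hzS, card_filter_lt_codegree_le hsparse hz, Nat.cast_nonneg (α := ℝ) #S]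

/-- `u` and `w` are nonadjacent, have few common neighbours in `S`, and the degree of `u` is at
most that of `w`. -/
structure IsFarPair (G : SimpleGraph V) (S : Finset V) (u w : V) : Prop where
  not_adj : ¬ G.Adj u w
  card_inter_le : (#(nbhdIn G u S ∩ nbhdIn G w S) : ℝ) ≤ #(nbhdIn G u S) / 8
  card_le : (#(nbhdIn G u S) : ℝ) ≤ #(nbhdIn G w S)

lemma isFarPair_of_notMem_nearSet {u w : V} (hw : w ∈ S) (hnear : w ∉ nearSet G S u)
    (hle : (#(nbhdIn G u S) : ℝ) ≤ #(nbhdIn G w S)) : IsFarPair G S u w := by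
  simp only [nearSet, mem_filter, not_and, not_or, not_lt] at hnear
  exact ⟨(hnear hw).1, by rw [nbhdIn_inter_nbhdIn]; exact (hnear hw).2, hle⟩

lemma HasCompletePairs.exists_rich_far (h : HasCompletePairs G η q S) (hη : 0 < η)
    (hq : 0 < q) (hqS : q ≤ #S / 40) (hsparse : SparseTo G (1 / 200) S S) {L N Z : Finset V}
    (hL : L ⊆ S) (hLcard : (#S : ℝ) / 5 ≤ #L) (hN : N ⊆ S) (hNq : q ≤ #N) (hZ : Z ⊆ S)
    (hZcard : #Z ≤ 2) (hZpos : ∀ z ∈ Z, (0 : ℝ) < #(nbhdIn G z S))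
    (hZL : ∀ z ∈ Z, ∀ x ∈ L, (#(nbhdIn G z S) : ℝ) ≤ #(nbhdIn G x S)) :
    ∃ x ∈ L, η * #N ≤ #(nbhdIn G x N) ∧ ∀ z ∈ Z, IsFarPair G S z x := by
  have hnear : (#(Z.biUnion (nearSet G S)) : ℝ) ≤ 2 * (#S / 20) := by
    calc (#(Z.biUnion (nearSet G S)) : ℝ) ≤ ∑ z ∈ Z, (#(nearSet G S z) : ℝ) := by
          exact_mod_cast card_biUnion_le
      _ ≤ #Z • (#S / 20 : ℝ) :=
          sum_le_card_nsmul _ _ _ fun z hz ↦ card_nearSet_le hsparse (hZ hz) (hZpos z hz)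
      _ ≤ 2 * (#S / 20) := by
          rw [nsmul_eq_mul]
          gcongr
          exact_mod_cast hZcard
  have hbad : #(lowDegIn G η N S ∪ Z.biUnion (nearSet G S)) < #L := by
    rw [← Nat.cast_lt (α := ℝ)]
    linarith [cast_card_union_le (lowDegIn G η N S) (Z.biUnion (nearSet G S)),
      h.card_lowDegIn_lt hη hq hN hNq]
  obtain ⟨x, hxL, hx⟩ := exists_mem_notMem_of_card_lt_card hbad
  simp only [mem_union, mem_biUnion, not_or, not_exists, not_and] at hx
  exact ⟨x, hxL, mul_card_le_of_notMem_lowDegIn (hL hxL) hx.1, fun z hz ↦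
    isFarPair_of_notMem_nearSet (hL hxL) (hx.2 z hz) (hZL z hz x hxL)⟩

/-- An edge `t t'` between the private neighbourhoods of `u` and `w` outside `N(v)` closes the
induced 5-cycle `v u t t' w`. -/
lemma IsFarPair.not_both_private_large {u v w : V} (h : IsFarPair G S u w) (hC : NoInducedC5 G)
    (hedge : ∀ A ⊆ S, ∀ B ⊆ S, q ≤ #A → q ≤ #B → ∃ a ∈ A, ∃ b ∈ B, G.Adj a b)
    (hvu : G.Adj v u) (hvw : G.Adj v w) (hq : q ≤ #(nbhdIn G u S) / 8)
    (hu : (#(nbhdIn G u S) : ℝ) / 4 ≤ #(nbhdIn G u S \ nbhdIn G v S)) :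
    (#(nbhdIn G w S \ nbhdIn G v S) : ℝ) < #(nbhdIn G w S) / 4 := by
  by_contra! hw
  have hprivate (X Y Z : Finset V) : (#(X \ Z) : ℝ) ≤ #((X \ Z) \ Y) + #(X ∩ Y) := by
    have hsub : X \ Z ⊆ (X \ Z) \ Y ∪ X ∩ Y := by
      intro x
      simp only [mem_union, mem_sdiff, mem_inter]
      tauto
    exact (Nat.cast_le.2 (card_le_card hsub)).trans (cast_card_union_le _ _)
  have hu' := hprivate (nbhdIn G u S) (nbhdIn G w S) (nbhdIn G v S)
  have hw' := hprivate (nbhdIn G w S) (nbhdIn G u S) (nbhdIn G v S)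
  rw [inter_comm] at hw'
  have hsubS (x y z : V) : (nbhdIn G x S \ nbhdIn G y S) \ nbhdIn G z S ⊆ S :=
    sdiff_subset.trans (sdiff_subset.trans (nbhdIn_subset G x S))
  obtain ⟨t, ht, t', ht', htt'⟩ := hedge _ (hsubS u v w) _ (hsubS w v u)
    (by linarith [h.card_inter_le]) (by linarith [h.card_inter_le, h.card_le])
  simp only [mem_sdiff, mem_nbhdIn, not_and] at ht ht'
  obtain ⟨⟨⟨htS, hut⟩, hvt⟩, hwt⟩ := ht
  obtain ⟨⟨⟨htS', hwt'⟩, hvt'⟩, hut'⟩ := ht'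
  exact hC v u t t' w hvu hut htt' hwt'.symm hvw.symm (hvt htS) (hut' htS')
    (fun h ↦ hwt htS h.symm) (fun h ↦ hvt' htS' h.symm) (fun hwu ↦ h.not_adj hwu.symm)

lemma IsFarPair.exists_private_large {u v w : V} (h : IsFarPair G S u w)
    (hvu : (#(nbhdIn G v S) : ℝ) ≤ #(nbhdIn G u S))
    (hu : (#(nbhdIn G u S \ nbhdIn G v S) : ℝ) < #(nbhdIn G u S) / 4) :
    (#(nbhdIn G w S) : ℝ) / 4 ≤ #(nbhdIn G w S \ nbhdIn G v S) := by
  by_contra! hw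
  have hunion : (#(nbhdIn G u S ∪ nbhdIn G w S) : ℝ) + #(nbhdIn G u S ∩ nbhdIn G w S) =
      #(nbhdIn G u S) + #(nbhdIn G w S) := by
    exact_mod_cast card_union_add_card_inter _ _
  have hcover : (#(nbhdIn G u S ∪ nbhdIn G w S) : ℝ) ≤ #(nbhdIn G u S \ nbhdIn G v S) +
      #(nbhdIn G w S \ nbhdIn G v S) + #(nbhdIn G v S) := by
    have hsub : nbhdIn G u S ∪ nbhdIn G w S ⊆ (nbhdIn G u S \ nbhdIn G v S ∪
        nbhdIn G w S \ nbhdIn G v S) ∪ nbhdIn G v S := by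
      intro x
      simp only [mem_union, mem_sdiff]
      tauto
    exact (Nat.cast_le.2 (card_le_card hsub)).trans <| (cast_card_union_le _ _).trans <|
      add_le_add_left (cast_card_union_le _ _) _
  linarith [h.card_inter_le, h.card_le, Nat.cast_nonneg (α := ℝ) #(nbhdIn G u S)]

lemma not_exists_far_triple (hC : NoInducedC5 G)
    (hedge : ∀ A ⊆ S, ∀ B ⊆ S, q ≤ #A → q ≤ #B → ∃ a ∈ A, ∃ b ∈ B, G.Adj a b) {v b x y : V}
    (hbx : IsFarPair G S b x) (hby : IsFarPair G S b y) (hxy : IsFarPair G S x y)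
    (hvb : G.Adj v b) (hvx : G.Adj v x) (hvy : G.Adj v y)
    (hle : (#(nbhdIn G v S) : ℝ) ≤ #(nbhdIn G b S)) (hq : q ≤ #(nbhdIn G b S) / 8) : False := by
  have hqx : q ≤ (#(nbhdIn G x S) : ℝ) / 8 := by linarith [hbx.card_le]
  have hbx₁ := hbx.not_both_private_large hC hedge hvb hvx hq
  have hby₁ := hby.not_both_private_large hC hedge hvb hvy hq
  have hxy₁ := hxy.not_both_private_large hC hedge hvx hvy hqx
  have hbx₂ := hbx.exists_private_large hle
  have hxy₂ := hxy.exists_private_large (hle.trans hbx.card_le)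
  have hby₂ := hby.exists_private_large hle
  simp only [← not_le] at *
  tauto

/-- Going up through four layers of increasing degree, complete pairs supply vertices `b`, `x`, `y`
with a common neighbour `v` of smaller degree which are pairwise far, since in a sparse graph only
few vertices are near a given one. -/
theorem not_hasCompletePairs_of_sparseTo (h : HasCompletePairs G η q S) (hC : NoInducedC5 G)
    (hη : 0 < η) (hη1 : η ≤ 1) (hq1 : 1 ≤ q) (hqS : q ≤ η ^ 2 * #S / 40)
    (hsparse : SparseTo G (1 / 200) S S) : False := by
  have hq : 0 < q := one_pos.trans_le hq1
  have hS0 : (0 : ℝ) ≤ #S := Nat.cast_nonneg _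
  have hη2 : η ^ 2 * #S ≤ η * #S := by nlinarith [mul_nonneg hη.le hS0]
  have hηS : η * #S ≤ #S := mul_le_of_le_one_left hS0 hη1
  have hqS' : q ≤ #S / 40 := by linarith
  obtain ⟨L, hLS, hLcard', hLdeg⟩ := exists_four_layers S fun u ↦ (#(nbhdIn G u S) : ℝ)
  have hLcard (i : Fin 4) : (#S : ℝ) / 5 ≤ #(L i) := by linarith [hLcard' i]
  have hLle {i j : Fin 4} (hij : i < j) {u : V} (hu : u ∈ L i) :
      ∀ w ∈ L j, (#(nbhdIn G u S) : ℝ) ≤ #(nbhdIn G w S) := hLdeg i j hij u hu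
  obtain ⟨b, hb, hbL, -⟩ := h.exists_rich_far hη hq hqS' hsparse (hLS 1) (hLcard 1) (hLS 0)
    (by linarith [hLcard 0]) (Z := ∅) (by simp) (by simp) (by simp) (by simp)
  have hW₁S : nbhdIn G b (L 0) ⊆ S := (nbhdIn_subset _ _ _).trans (hLS 0)
  have hW₁ : η * #S / 5 ≤ #(nbhdIn G b (L 0)) := by nlinarith [hLcard 0]
  have hbS : η * #S / 5 ≤ #(nbhdIn G b S) :=
    hW₁.trans (Nat.cast_le.2 (card_nbhdIn_mono G b (hLS 0)))
  have hbpos : (0 : ℝ) < #(nbhdIn G b S) := by linarith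
  obtain ⟨x, hx, hxW₁, hfar⟩ := h.exists_rich_far hη hq hqS' hsparse (hLS 2) (hLcard 2) hW₁S
    (by linarith) (Z := {b}) (by simpa using hLS 1 hb) (by simp)
    (by simpa only [mem_singleton, forall_eq] using hbpos)
    (by simpa only [mem_singleton, forall_eq] using hLle (by decide) hb)
  have hbx : IsFarPair G S b x := hfar b (mem_singleton_self b)
  have hW₂S : nbhdIn G x (nbhdIn G b (L 0)) ⊆ S := (nbhdIn_subset _ _ _).trans hW₁S
  have hW₂ : η ^ 2 * #S / 5 ≤ #(nbhdIn G x (nbhdIn G b (L 0))) := by nlinarith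
  obtain ⟨y, -, hyW₂, hfar⟩ := h.exists_rich_far hη hq hqS' hsparse (hLS 3) (hLcard 3) hW₂S
    (by linarith) (Z := {b, x}) (by simp [insert_subset_iff, hLS 1 hb, hLS 2 hx]) card_le_two
    (by simpa only [mem_insert, mem_singleton, forall_eq_or_imp, forall_eq] using
      ⟨hbpos, hbpos.trans_le hbx.card_le⟩)
    (by simpa only [mem_insert, mem_singleton, forall_eq_or_imp, forall_eq] using
      ⟨hLle (by decide) hb, hLle (by decide) hx⟩)
  have hypos : (0 : ℝ) < #(nbhdIn G y (nbhdIn G x (nbhdIn G b (L 0)))) :=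
    (mul_pos hη (by linarith)).trans_le hyW₂
  obtain ⟨v, hv⟩ := card_pos.1 (Nat.cast_pos.1 hypos)
  simp only [mem_nbhdIn] at hv
  obtain ⟨⟨⟨hvL, hbv⟩, hxv⟩, hyv⟩ := hv
  exact not_exists_far_triple hC (fun A hA B hB ↦ h.exists_adj hη hq hA hB) hbx
    (hfar b (by simp)) (hfar x (by simp)) hbv.symm hxv.symm hyv.symm
    (hLle (by decide) hvL b hb) (by linarith)

lemma HasCompletePairs.card_lt_of_compl {η' q' : ℝ} {N : Finset V} (h : HasCompletePairs G η q N)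
    (h' : HasCompletePairs Gᶜ η' q' N) (hη : 0 < η) (hq : 0 < q) (hqN : q ≤ η' * #N) :
    (#N : ℝ) < q' := by
  by_contra! hN
  obtain ⟨A, hA, B, hB, hle, hcompl⟩ := h' N Subset.rfl N Subset.rfl hN hN
  have hAN : (#A : ℝ) ≤ #N := Nat.cast_le.2 (card_le_card hA)
  have hBN : (#B : ℝ) ≤ #N := Nat.cast_le.2 (card_le_card hB)
  have hNpos : (0 : ℝ) < #N :=
    (Nat.cast_nonneg _).lt_of_ne fun h0 ↦ by simp only [← h0, mul_zero] at hqN; linarith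
  have hqA : q ≤ #A := hqN.trans <| le_of_mul_le_mul_right (a := (#N : ℝ)) (by nlinarith) hNpos
  have hqB : q ≤ #B := hqN.trans <| le_of_mul_le_mul_right (a := (#N : ℝ)) (by nlinarith) hNpos
  obtain ⟨a, ha, b, hb, hab⟩ := h.exists_adj hη hq hA hB hqA hqB
  exact (compl_adj G a b |>.1 (hcompl a ha b hb)).2 hab

end HasCompletePairs

/-- In one of `G` and its complement, every vertex of `B` has degree at most `d * #A` into `A`. -/
def UniformPair (G : SimpleGraph V) (d : ℝ) (A B : Finset V) : Prop :=
  SparseTo G d A B ∨ SparseTo Gᶜ d A B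

lemma UniformPair.compl {d : ℝ} {A B : Finset V} (h : UniformPair G d A B) :
    UniformPair Gᶜ d A B := by
  rw [UniformPair, compl_compl]
  exact h.symm

lemma uniformPair_singleton (G : SimpleGraph V) {d : ℝ} (hd : 0 ≤ d) (a b : V) :
    UniformPair G d {a} {b} := by
  by_cases hab : G.Adj b a
  · exact Or.inr (by simpa [SparseTo, nbhdIn, filter_singleton, hab] using hd)
  · exact Or.inl (by simpa [SparseTo, nbhdIn, filter_singleton, hab] using hd)

/-- The vertices of `U` have total degree at most `s * #U + D * #U ^ 2` in `G[U]`. -/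
def AvgSparse (G : SimpleGraph V) (s D : ℝ) (U : Finset V) : Prop :=
  ∑ u ∈ U, (#(nbhdIn G u U) : ℝ) ≤ s * #U + D * (#U : ℝ) ^ 2

lemma card_nbhdIn_union (G : SimpleGraph V) (v : V) {A B : Finset V} (h : Disjoint A B) :
    #(nbhdIn G v (A ∪ B)) = #(nbhdIn G v A) + #(nbhdIn G v B) := by
  rw [nbhdIn, filter_union, card_union_of_disjoint (disjoint_filter_filter h), nbhdIn, nbhdIn]

lemma SparseTo.sum_card_nbhdIn_le {d : ℝ} {A B : Finset V} (h : SparseTo G d A B) :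
    ∑ b ∈ B, (#(nbhdIn G b A) : ℝ) ≤ #B * (d * #A) := by
  simpa only [nsmul_eq_mul] using sum_le_card_nsmul B _ _ h

lemma AvgSparse.union {s D : ℝ} {U U' : Finset V} (hU : AvgSparse G s D U)
    (hU' : AvgSparse G s D U') (hdisj : Disjoint U U') (hcross : SparseTo G D U' U) :
    AvgSparse G s D (U ∪ U') := by
  have hcomm : ∑ u ∈ U', (#(nbhdIn G u U) : ℝ) = ∑ u ∈ U, (#(nbhdIn G u U') : ℝ) := by
    exact_mod_cast sum_card_nbhdIn_comm G U' U
  have hcross' := hcross.sum_card_nbhdIn_le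
  unfold AvgSparse at *
  rw [sum_union hdisj]
  simp only [card_nbhdIn_union G _ hdisj, card_union_of_disjoint hdisj, Nat.cast_add,
    sum_add_distrib, hcomm]
  linarith

lemma card_div_two_le_card_filter_le {A : Finset V} {f : V → ℝ} {M : ℝ} (hM : 0 < M)
    (hf : ∀ a ∈ A, 0 ≤ f a) (hsum : ∑ a ∈ A, f a ≤ M * (#A / 2)) :
    (#A : ℝ) / 2 ≤ #{a ∈ A | f a ≤ M} := by
  have hcard : (#{a ∈ A | f a ≤ M} : ℝ) + #{a ∈ A | ¬ f a ≤ M} = #A := by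
    exact_mod_cast card_filter_add_card_filter_not (s := A) fun a ↦ f a ≤ M
  have hmarkov : M * #{a ∈ A | ¬ f a ≤ M} ≤ M * (#A / 2) :=
    calc M * #{a ∈ A | ¬ f a ≤ M}
        = #{a ∈ A | ¬ f a ≤ M} • M := by rw [nsmul_eq_mul, mul_comm]
      _ ≤ ∑ a ∈ A with ¬ f a ≤ M, f a :=
          card_nsmul_le_sum _ _ _ fun a ha ↦ (not_le.1 (mem_filter.1 ha).2).le
      _ ≤ ∑ a ∈ A, f a := sum_le_sum_of_subset_of_nonneg (filter_subset _ _) fun a ha _ ↦ hf a ha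
      _ ≤ M * (#A / 2) := hsum
  linarith [le_of_mul_le_mul_left hmarkov hM]

lemma SparseTo.exists_sparseTo_swap {d : ℝ} {A B : Finset V} (h : SparseTo G d A B) (hd : 0 < d) :
    ∃ A' ⊆ A, (#A : ℝ) / 2 ≤ #A' ∧ SparseTo G (2 * d) B A' := by
  obtain rfl | hB := B.eq_empty_or_nonempty
  · refine ⟨A, Subset.rfl, half_le_self (Nat.cast_nonneg _), fun a _ ↦ ?_⟩
    simp [nbhdIn]
  refine ⟨{a ∈ A | (#(nbhdIn G a B) : ℝ) ≤ 2 * d * #B}, filter_subset _ _,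
    card_div_two_le_card_filter_le (by positivity) (fun _ _ ↦ Nat.cast_nonneg _) ?_,
    fun a ha ↦ (mem_filter.1 ha).2⟩
  calc ∑ a ∈ A, (#(nbhdIn G a B) : ℝ) = ∑ b ∈ B, (#(nbhdIn G b A) : ℝ) := by
        exact_mod_cast sum_card_nbhdIn_comm G A B
    _ ≤ #B * (d * #A) := h.sum_card_nbhdIn_le
    _ = 2 * d * #B * (#A / 2) := by ring

/-- `T` contains a set `U` which is sparse on average in `G` and a set `W` which is sparse on
average in the complement of `G`, with `K * s ^ 2 ≤ #U * #W`. Such pairs of sets can be merged along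
uniform pairs, `K` being additive, without losing in the densities. -/
def HasSparseAndDense (G : SimpleGraph V) (s D K : ℝ) (T : Finset V) : Prop :=
  ∃ U ⊆ T, ∃ W ⊆ T, AvgSparse G s D U ∧ AvgSparse Gᶜ s D W ∧ K * s ^ 2 ≤ #U * #W

section HasSparseAndDense

variable {s D K d α β : ℝ} {A B T : Finset V}

lemma HasSparseAndDense.compl (h : HasSparseAndDense G s D K T) : HasSparseAndDense Gᶜ s D K T := by
  obtain ⟨U, hU, W, hW, hUs, hWs, hle⟩ := h
  exact ⟨W, hW, U, hU, hWs, by rwa [compl_compl], by rwa [mul_comm (#W : ℝ)]⟩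

lemma HasSparseAndDense.mono {T' : Finset V} (h : HasSparseAndDense G s D K T) (hT : T ⊆ T') :
    HasSparseAndDense G s D K T' := by
  obtain ⟨U, hU, W, hW, h⟩ := h
  exact ⟨U, hU.trans hT, W, hW.trans hT, h⟩

lemma hasSparseAndDense_zero (G : SimpleGraph V) (s D : ℝ) (T : Finset V) :
    HasSparseAndDense G s D 0 T :=
  ⟨∅, empty_subset T, ∅, empty_subset T, by simp [AvgSparse], by simp [AvgSparse], by simp⟩

lemma card_nbhdIn_lt_of_mem {v : V} {X : Finset V} (hv : v ∈ X) : #(nbhdIn G v X) < #X :=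
  card_lt_card <| (nbhdIn_subset G v X).ssubset_of_mem_notMem hv fun h ↦ G.irrefl (mem_nbhdIn.1 h).2

lemma hasSparseAndDense_one (G : SimpleGraph V) (hs : 0 ≤ s) (hD : 0 ≤ D) (hT : s ≤ #T) :
    HasSparseAndDense G s D 1 T := by
  obtain ⟨U, hUT, hUcard⟩ := exists_subset_card_eq (Nat.ceil_le.2 hT)
  have hsU : s ≤ #U := hUcard ▸ Nat.le_ceil s
  have hUs : (#U : ℝ) < s + 1 := hUcard ▸ Nat.ceil_lt_add_one hs
  have hsparse (H : SimpleGraph V) : AvgSparse H s D U := by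
    have hdeg : ∀ u ∈ U, (#(nbhdIn H u U) : ℝ) ≤ s := fun u hu ↦ by
      have hlt : (#(nbhdIn H u U) : ℝ) + 1 ≤ #U := by exact_mod_cast card_nbhdIn_lt_of_mem hu
      linarith
    calc ∑ u ∈ U, (#(nbhdIn H u U) : ℝ) ≤ #U • s := sum_le_card_nsmul _ _ _ hdeg
      _ = s * #U := by rw [nsmul_eq_mul, mul_comm]
      _ ≤ s * #U + D * (#U : ℝ) ^ 2 := le_add_of_nonneg_right (by positivity)
  exact ⟨U, hUT, U, hUT, hsparse G, hsparse Gᶜ, by nlinarith⟩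

/-- Keeping the larger of the two sets `W` and the union of the two sets `U` adds up the values of
`K`. -/
lemma SparseTo.hasSparseAndDense_add (h : SparseTo G d A B) (hd : 0 < d) (hAB : Disjoint A B)
    (hA : ∀ A' ⊆ A, (#A : ℝ) / 2 ≤ #A' → HasSparseAndDense G s (2 * d) α A')
    (hB : HasSparseAndDense G s (2 * d) β B) :
    HasSparseAndDense G s (2 * d) (α + β) (A ∪ B) := by
  obtain ⟨U, hUB, W, hWB, hU, hW, hle⟩ := hB
  obtain ⟨A', hA'A, hA'card, hA'⟩ := SparseTo.exists_sparseTo_swap (fun b hb ↦ h b (hUB hb)) hd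
  obtain ⟨U', hU'A, W', hW'A, hU', hW', hle'⟩ := hA A' hA'A hA'card
  have hdisj : Disjoint U' U := hAB.mono (hU'A.trans hA'A) hUB
  have hsub : U' ∪ U ⊆ A ∪ B := union_subset_union (hU'A.trans hA'A) hUB
  have hunion : AvgSparse G s (2 * d) (U' ∪ U) := hU'.union hU hdisj fun u hu ↦ hA' u (hU'A hu)
  have hcard : (#(U' ∪ U) : ℝ) = #U' + #U := by exact_mod_cast card_union_of_disjoint hdisj
  obtain hWW' | hW'W := le_total (#W : ℝ) #W'
  · refine ⟨U' ∪ U, hsub, W', (hW'A.trans hA'A).trans subset_union_left, hunion, hW', ?_⟩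
    nlinarith [mul_le_mul_of_nonneg_left hWW' (Nat.cast_nonneg (α := ℝ) #U)]
  · refine ⟨U' ∪ U, hsub, W, hWB.trans subset_union_right, hunion, hW, ?_⟩
    nlinarith [mul_le_mul_of_nonneg_left hW'W (Nat.cast_nonneg (α := ℝ) #U')]

lemma UniformPair.hasSparseAndDense_add (h : UniformPair G d A B) (hd : 0 < d)
    (hAB : Disjoint A B)
    (hA : ∀ A' ⊆ A, (#A : ℝ) / 2 ≤ #A' → HasSparseAndDense G s (2 * d) α A')
    (hB : HasSparseAndDense G s (2 * d) β B) :
    HasSparseAndDense G s (2 * d) (α + β) (A ∪ B) := by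
  obtain h | h := h
  · exact h.hasSparseAndDense_add hd hAB hA hB
  · simpa only [compl_compl] using
      (h.hasSparseAndDense_add hd hAB (fun A' hA' hle ↦ (hA A' hA' hle).compl) hB.compl).compl

lemma AvgSparse.exists_sparseTo {U : Finset V} (h : AvgSparse G s (2 * d) U) (hd : 0 < d)
    (hs : 0 < s) (hU : s / d ≤ #U) :
    ∃ X ⊆ U, s / (2 * d) ≤ #X ∧ SparseTo G (12 * d) X X := by
  have hsd : s ≤ d * #U := by rwa [div_le_iff₀' hd] at hU
  have hpos : (0 : ℝ) < #U := (div_pos hs hd).trans_le hU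
  set X := {u ∈ U | (#(nbhdIn G u U) : ℝ) ≤ 6 * d * #U}
  have hXU : X ⊆ U := filter_subset _ _
  have hX : (#U : ℝ) / 2 ≤ #X :=
    card_div_two_le_card_filter_le (by positivity) (fun _ _ ↦ Nat.cast_nonneg _)
      (h.trans (by nlinarith))
  refine ⟨X, hXU, ?_, fun v hv ↦ ?_⟩
  · calc s / (2 * d) = s / d / 2 := by rw [mul_comm, div_div]
      _ ≤ #U / 2 := by gcongr
      _ ≤ #X := hX
  · calc (#(nbhdIn G v X) : ℝ) ≤ #(nbhdIn G v U) := Nat.cast_le.2 (card_nbhdIn_mono G v hXU)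
      _ ≤ 6 * d * #U := (mem_filter.1 hv).2
      _ = 12 * d * (#U / 2) := by ring
      _ ≤ 12 * d * #X := by gcongr

lemma HasSparseAndDense.exists_uniformPair (h : HasSparseAndDense G s (2 * d) K T) (hd : 0 < d)
    (hs : 0 < s) (hK : 1 / d ^ 2 ≤ K) :
    ∃ X ⊆ T, s / (2 * d) ≤ #X ∧ UniformPair G (12 * d) X X := by
  obtain ⟨U, hUT, W, hWT, hU, hW, hle⟩ := h
  have hprod : s / d * (s / d) ≤ #U * #W :=
    calc s / d * (s / d) = 1 / d ^ 2 * s ^ 2 := by ring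
      _ ≤ K * s ^ 2 := by gcongr
      _ ≤ #U * #W := hle
  obtain hUcard | hUcard := le_or_gt (s / d) #U
  · obtain ⟨X, hXU, hX, hsparse⟩ := hU.exists_sparseTo hd hs hUcard
    exact ⟨X, hXU.trans hUT, hX, Or.inl hsparse⟩
  · have hWcard : s / d ≤ #W := by
      by_contra! hlt
      exact hprod.not_gt (mul_lt_mul'' hUcard hlt (by positivity) (by positivity))
    obtain ⟨X, hXW, hX, hsparse⟩ := hW.exists_sparseTo hd hs hWcard
    exact ⟨X, hXW.trans hWT, hX, Or.inr hsparse⟩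

end HasSparseAndDense

/-- `T` contains a uniform pair of disjoint sets which occupy a `p`-fraction and a `κ`-fraction of
`T`. The name refers to the case of interest, where `p` is far smaller than `κ`. -/
def HasSkewPair (G : SimpleGraph V) (p κ d : ℝ) (T : Finset V) : Prop :=
  ∃ A ⊆ T, ∃ B ⊆ T, Disjoint A B ∧ p * #T ≤ #A ∧ κ * #T ≤ #B ∧ UniformPair G d A B

lemma HasSkewPair.compl {p κ d : ℝ} {T : Finset V} (h : HasSkewPair G p κ d T) :
    HasSkewPair Gᶜ p κ d T := by
  obtain ⟨A, hA, B, hB, hAB, hcardA, hcardB, h⟩ := h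
  exact ⟨A, hA, B, hB, hAB, hcardA, hcardB, h.compl⟩

lemma HasSkewPair.mono {p p' κ d : ℝ} {T : Finset V} (h : HasSkewPair G p κ d T) (hp : p' ≤ p) :
    HasSkewPair G p' κ d T := by
  obtain ⟨A, hA, B, hB, hAB, hcardA, h⟩ := h
  exact ⟨A, hA, B, hB, hAB, le_trans (by gcongr) hcardA, h⟩

/-- Every `T` with `2 ≤ μ * #T` contains a `γ`-fraction `S` such that every `μ`-fraction of `S` has
a skew pair. -/
def HereditarilySkew (G : SimpleGraph V) (γ μ π κ d : ℝ) : Prop :=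
  ∀ T : Finset V, 2 ≤ μ * #T → ∃ S ⊆ T, γ * #T ≤ #S ∧
    ∀ S' ⊆ S, μ * #S ≤ #S' → HasSkewPair G π κ d S'

section HereditarilySkew

variable {γ μ π κ d : ℝ} {k : ℕ}

/-- Follow the large sides of skew pairs for `k` levels, collecting a contribution `α` from each of
the `k` small sides. -/
lemma hasSparseAndDense_of_hasSkewPair {s α m : ℝ} (hd : 0 < d) (hκ : 0 ≤ κ) (hκ1 : κ ≤ 1)
    (hπ : 0 ≤ π) {S : Finset V} (hskew : ∀ S' ⊆ S, m ≤ #S' → HasSkewPair G π κ d S')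
    (hleaf : ∀ A ⊆ S, π * m / 2 ≤ #A → HasSparseAndDense G s (2 * d) α A) (hm : m ≤ κ ^ k * #S) :
    HasSparseAndDense G s (2 * d) (k * α) S := by
  induction k generalizing S with
  | zero => simpa using hasSparseAndDense_zero G s (2 * d) S
  | succ k ih =>
    have hmS : m ≤ #S := hm.trans <|
      mul_le_of_le_one_left (Nat.cast_nonneg _) (pow_le_one₀ hκ hκ1)
    obtain ⟨A, hA, B, hB, hAB, hcardA, hcardB, huniform⟩ := hskew S Subset.rfl hmS
    have hmB : m ≤ κ ^ k * #B :=
      calc m ≤ κ ^ (k + 1) * #S := hm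
        _ = κ ^ k * (κ * #S) := by ring
        _ ≤ κ ^ k * #B := by gcongr
    have hmA : π * m ≤ #A := le_trans (by gcongr) hcardA
    have hB' : HasSparseAndDense G s (2 * d) (k * α) B :=
      ih (fun S' hS' ↦ hskew S' (hS'.trans hB)) (fun A' hA' ↦ hleaf A' (hA'.trans hB)) hmB
    rw [Nat.cast_succ, add_one_mul, add_comm]
    exact (huniform.hasSparseAndDense_add hd hAB
      (fun A' hA' hle ↦ hleaf A' (hA'.trans hA) (by linarith)) hB').mono (union_subset hA hB)

theorem HereditarilySkew.hasSparseAndDense (h : HereditarilySkew G γ μ π κ d) (hd : 0 < d)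
    (hγ : 0 < γ) (hγ1 : γ ≤ 1) (hπ : 0 < π) (hπ1 : π ≤ 1) (hκ : 0 ≤ κ) (hκ1 : κ ≤ 1) (hμ : 0 < μ)
    (hμk : μ ≤ κ ^ k) {s : ℝ} (hs : 1 ≤ s) (t : ℕ) :
    ∀ T : Finset V, (2 / (π * μ * γ)) ^ t * s ≤ #T →
      HasSparseAndDense G s (2 * d) ((k : ℝ) ^ t) T := by
  induction t with
  | zero =>
    intro T hT
    rw [pow_zero, one_mul] at hT
    simpa using hasSparseAndDense_one G (by linarith) (by positivity) hT
  | succ t ih =>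
    intro T hT
    have hpos : 0 < π * μ * γ := by positivity
    have hμ1 : μ ≤ 1 := hμk.trans (pow_le_one₀ hκ hκ1)
    have hQ : 2 * ((2 / (π * μ * γ)) ^ t * s) ≤ π * μ * γ * #T :=
      calc 2 * ((2 / (π * μ * γ)) ^ t * s)
          = π * μ * γ * ((2 / (π * μ * γ)) ^ (t + 1) * s) := by
            rw [pow_succ', mul_assoc (2 / _), ← mul_assoc (π * μ * γ), mul_div_cancel₀ _ hpos.ne']
        _ ≤ π * μ * γ * #T := by gcongr
    have hμT : 2 ≤ μ * #T := by
      have hprod : π * γ ≤ 1 := mul_le_one₀ hπ1 hγ.le hγ1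
      have hone : 1 ≤ (2 / (π * μ * γ)) ^ t * s := by
        refine one_le_mul_of_one_le_of_one_le (one_le_pow₀ ?_) hs
        rw [one_le_div hpos]
        nlinarith [mul_le_mul_of_nonneg_left hprod hμ.le]
      calc 2 ≤ π * μ * γ * #T := by linarith
        _ = π * γ * (μ * #T) := by ring
        _ ≤ μ * #T := mul_le_of_le_one_left (by positivity) hprod
    obtain ⟨S, hST, hScard, hskew⟩ := h T hμT
    have hsize : (2 / (π * μ * γ)) ^ t * s ≤ π * (μ * #S) / 2 := by
      have hle : π * μ * (γ * #T) ≤ π * μ * #S := by gcongr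
      linarith
    rw [pow_succ']
    exact (hasSparseAndDense_of_hasSkewPair hd hκ hκ1 hπ.le hskew
      (fun A _ hA ↦ ih A (hsize.trans hA)) (by gcongr)).mono hST

theorem HereditarilySkew.exists_uniformPair (h : HereditarilySkew G γ μ π κ d) (hd : 0 < d)
    (hd1 : d ≤ 1 / 2) (hγ : 0 < γ) (hγ1 : γ ≤ 1) (hπ : 0 < π) (hπ1 : π ≤ 1) (hκ : 0 ≤ κ)
    (hκ1 : κ ≤ 1) (hμ : 0 < μ) (hμk : μ ≤ κ ^ k) {t : ℕ} (hkt : 1 / d ^ 2 ≤ (k : ℝ) ^ t)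
    (T : Finset V) :
    ∃ X ⊆ T, (#T : ℝ) ≤ (2 / (π * μ * γ)) ^ t * #X ∧ UniformPair G (12 * d) X X := by
  set Q := (2 / (π * μ * γ)) ^ t
  have hQ : 0 < Q := by positivity
  obtain rfl | ⟨v, hv⟩ := T.eq_empty_or_nonempty
  · exact ⟨∅, Subset.rfl, by simp, Or.inl fun _ hu ↦ absurd hu (notMem_empty _)⟩
  obtain hsmall | hlarge := lt_or_ge (#T : ℝ) Q
  · exact ⟨{v}, singleton_subset_iff.2 hv, by simpa using hsmall.le,
      uniformPair_singleton G (by positivity) v v⟩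
  · have hs : 1 ≤ #T / Q := (one_le_div hQ).2 hlarge
    obtain ⟨X, hXT, hXcard, hX⟩ := (h.hasSparseAndDense hd hγ hγ1 hπ hπ1 hκ hκ1 hμ hμk hs t T
      (mul_div_cancel₀ _ hQ.ne').le).exists_uniformPair hd (by linarith) hkt
    refine ⟨X, hXT, (div_le_iff₀' hQ).1 (le_trans ?_ hXcard), hX⟩
    rw [le_div_iff₀ (by positivity)]
    exact mul_le_of_le_one_right (by linarith) (by linarith)

end HereditarilySkew

lemma exists_mem_forall_mul_le_card_nbhdIn {ι : Type*} [Fintype ι] (F : ι → SimpleGraph V)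
    {e q : ℝ} (A : ι → Finset V) {B : Finset V}
    (hF : ∀ i, ∀ B' ⊆ B, q ≤ #B' → ¬ SparseTo (F i) e (A i) B') (hB : Fintype.card ι * q < #B) :
    ∃ v ∈ B, ∀ i, e * #(A i) ≤ #(nbhdIn (F i) v (A i)) := by
  have hlow (i : ι) : (#(lowDegIn (F i) e (A i) B) : ℝ) ≤ q := by
    by_contra! hlt
    exact hF i _ (lowDegIn_subset _ _ _ _) hlt.le (sparseTo_lowDegIn _ _ _ _)
  have hcard : #(univ.biUnion fun i ↦ lowDegIn (F i) e (A i) B) < #B := by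
    have hsum : (#(univ.biUnion fun i ↦ lowDegIn (F i) e (A i) B) : ℝ) ≤ Fintype.card ι * q :=
      calc (#(univ.biUnion fun i ↦ lowDegIn (F i) e (A i) B) : ℝ)
          ≤ ∑ i, (#(lowDegIn (F i) e (A i) B) : ℝ) := by exact_mod_cast card_biUnion_le
        _ ≤ Fintype.card ι * q := by
            simpa only [nsmul_eq_mul, card_univ] using sum_le_card_nsmul univ _ q fun i _ ↦ hlow i
    exact_mod_cast hsum.trans_lt hB
  obtain ⟨v, hvB, hv⟩ := exists_mem_notMem_of_card_lt_card hcard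
  simp only [mem_biUnion, mem_univ, true_and, not_exists] at hv
  exact ⟨v, hvB, fun i ↦ mul_card_le_of_notMem_lowDegIn hvB (hv i)⟩

/-- Greedy embedding: in the absence of large uniform pairs, some vertex of the first part has, in
each other part, an `e`-fraction of neighbours or of non-neighbours, as prescribed by `H`. -/
lemma exists_adj_iff_of_not_uniformPair {k : ℕ} (H : SimpleGraph (Fin k)) {e q : ℝ} (he : 0 < e)
    (he1 : e ≤ 1) (hq : 0 < q) (P : Fin k → Finset V) (hcard : ∀ i, k * q ≤ e ^ k * #(P i))
    (hno : ∀ i j, i ≠ j → ∀ A ⊆ P i, ∀ B ⊆ P j, q ≤ #A → q ≤ #B → ¬ UniformPair G e A B) :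
    ∃ f : Fin k → V, (∀ i, f i ∈ P i) ∧ ∀ i j, i ≠ j → (G.Adj (f i) (f j) ↔ H.Adj i j) := by
  induction k with
  | zero => exact ⟨finZeroElim, finZeroElim, finZeroElim⟩
  | succ k ih =>
    push_cast at hcard
    have hlarge (i : Fin (k + 1)) : (k + 1) * q ≤ #(P i) := (hcard i).trans <|
      mul_le_of_le_one_left (Nat.cast_nonneg _) (pow_le_one₀ he.le he1)
    let F (i : Fin k) : SimpleGraph V := if H.Adj 0 i.succ then G else Gᶜ
    have hF {i : Fin k} {A B : Finset V} (h : SparseTo (F i) e A B) : UniformPair G e A B := by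
      by_cases hadj : H.Adj 0 i.succ
      · exact Or.inl (by simpa only [F, if_pos hadj] using h)
      · exact Or.inr (by simpa only [F, if_neg hadj] using h)
    obtain ⟨v, hv, hdeg⟩ := exists_mem_forall_mul_le_card_nbhdIn F (fun i ↦ P i.succ) (B := P 0)
      (fun i B hB hqB h ↦ hno i.succ 0 i.succ_ne_zero _ Subset.rfl B hB
        (by nlinarith [hlarge i.succ, Nat.cast_nonneg (α := ℝ) k]) hqB (hF h))
      (by rw [Fintype.card_fin]; linarith [hlarge 0])
    have hcard' (i : Fin k) : k * q ≤ e ^ k * #(nbhdIn (F i) v (P i.succ)) :=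
      calc (k : ℝ) * q ≤ (k + 1) * q := by gcongr; linarith
        _ ≤ e ^ (k + 1) * #(P i.succ) := hcard i.succ
        _ = e ^ k * (e * #(P i.succ)) := by ring
        _ ≤ e ^ k * #(nbhdIn (F i) v (P i.succ)) := by gcongr; exact hdeg i
    obtain ⟨f, hf, hadj⟩ := ih (H.comap Fin.succ) (fun i ↦ nbhdIn (F i) v (P i.succ)) hcard'
      fun i j hij A hA B hB ↦ hno i.succ j.succ (by simpa using hij) A
        (hA.trans (nbhdIn_subset _ _ _)) B (hB.trans (nbhdIn_subset _ _ _))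
    have hv_adj (i : Fin k) : G.Adj v (f i) ↔ H.Adj 0 i.succ := by
      have hvf : (F i).Adj v (f i) := (mem_nbhdIn.1 (hf i)).2
      by_cases h : H.Adj 0 i.succ <;> simp_all [F]
    refine ⟨Fin.cons v f, Fin.cases hv fun i ↦ nbhdIn_subset _ _ _ (hf i), ?_⟩
    refine Fin.cases (Fin.cases (by simp) fun j _ ↦ hv_adj j) fun i ↦
      Fin.cases (fun _ ↦ ?_) fun j hij ↦ hadj i j fun h ↦ hij (congrArg Fin.succ h)
    rw [G.adj_comm, H.adj_comm]
    exact hv_adj i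

lemma exists_pairwise_disjoint_card_eq {ι : Type*} [Fintype ι] {T : Finset V} {m : ℕ}
    (h : Fintype.card ι * m ≤ #T) : ∃ P : ι → Finset V, (∀ i, P i ⊆ T) ∧ (∀ i, #(P i) = m) ∧
      Pairwise fun i j ↦ Disjoint (P i) (P j) := by
  obtain ⟨g⟩ : Nonempty (ι × Fin m ↪ T) := Function.Embedding.nonempty_of_card_le (by simpa)
  have hinj {i i' : ι} {j j' : Fin m} (h : (g (i, j) : V) = g (i', j')) : (i, j) = (i', j') :=
    g.injective (Subtype.ext h)
  refine ⟨fun i ↦ univ.image fun j ↦ (g (i, j) : V), fun i ↦ ?_, fun i ↦ ?_, fun i i' hii' ↦ ?_⟩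
  · simp [image_subset_iff]
  · rw [card_image_of_injective _ fun j j' h ↦ (Prod.ext_iff.1 (hinj h)).2, card_univ,
      Fintype.card_fin]
  · simp only [Finset.disjoint_left, mem_image, mem_univ, true_and, not_exists]
    rintro _ ⟨j, rfl⟩ j' h
    exact hii' (Prod.ext_iff.1 (hinj h)).1.symm

lemma nonempty_embedding_of_not_hasSkewPair {k : ℕ} (H : SimpleGraph (Fin k)) {e : ℝ} (he : 0 < e)
    (he1 : e ≤ 1) {T : Finset V} (hT : k < #T)
    (hno : ¬ HasSkewPair G (e ^ k / (2 * (k + 1) ^ 2)) (e ^ k / (2 * (k + 1) ^ 2)) e T) :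
    Nonempty (H ↪g G) := by
  set p := e ^ k / (2 * (k + 1) ^ 2)
  have hp : p * (2 * (k + 1) ^ 2) = e ^ k := div_mul_cancel₀ _ (by positivity)
  set m := #T / (k + 1)
  have hm_le : m * (k + 1) ≤ #T := Nat.div_mul_le_self _ _
  have hm : (#T : ℝ) ≤ 2 * (k + 1) * m := by
    have hm1 : 1 ≤ m := (Nat.one_le_div_iff (by lia)).2 hT
    have hlt : #T < (k + 1) * (m + 1) := Nat.lt_mul_div_succ #T (by lia)
    exact_mod_cast (by nlinarith : #T ≤ 2 * (k + 1) * m)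
  obtain ⟨P, hPT, hPcard, hdisj⟩ := exists_pairwise_disjoint_card_eq (ι := Fin k) (T := T) (m := m)
    (by rw [Fintype.card_fin]; nlinarith)
  have hcard (i : Fin k) : k * (p * #T) ≤ e ^ k * #(P i) :=
    calc k * (p * #T) ≤ (k + 1) * (p * (2 * (k + 1) * m)) := by gcongr; linarith
      _ = e ^ k * #(P i) := by rw [← hp, hPcard]; ring
  have hTpos : (0 : ℝ) < #T := Nat.cast_pos.2 (by lia)
  obtain ⟨f, hf, hadj⟩ := exists_adj_iff_of_not_uniformPair H he he1 (q := p * #T) (by positivity)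
    P hcard fun i j hij A hA B hB hAq hBq huniform ↦ hno ⟨A, hA.trans (hPT i), B,
      hB.trans (hPT j), (hdisj hij).mono hA hB, hAq, hBq, huniform⟩
  have hinj : Function.Injective f := fun i j hij ↦ by
    by_contra hne
    exact Finset.disjoint_left.1 (hdisj hne) (hf i) (hij ▸ hf j)
  refine ⟨⟨f, hinj⟩, fun {i j} ↦ ?_⟩
  obtain rfl | hij := eq_or_ne i j
  · simp
  · exact hadj i j hij

lemma hasSkewPair_of_isEmpty_embedding {k : ℕ} {H : SimpleGraph (Fin k)} (h : IsEmpty (H ↪g G))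
    {e : ℝ} (he : 0 < e) (he1 : e ≤ 1) {T : Finset V} (hT : 2 ≤ #T) :
    HasSkewPair G (e ^ k / (2 * (k + 1) ^ 2)) (e ^ k / (2 * (k + 1) ^ 2)) e T := by
  obtain hlarge | hsmall := lt_or_ge k #T
  · by_contra hno
    exact not_nonempty_iff.2 h (nonempty_embedding_of_not_hasSkewPair H he he1 hlarge hno)
  obtain ⟨a, ha, b, hb, hab⟩ := one_lt_card.1 hT
  have hfrac : e ^ k / (2 * (k + 1) ^ 2) * #T ≤ 1 := by
    have hTk : (#T : ℝ) ≤ 2 * (k + 1) ^ 2 := by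
      exact_mod_cast (by nlinarith : #T ≤ 2 * (k + 1) ^ 2)
    rw [div_mul_eq_mul_div]
    refine div_le_one_of_le₀ ((mul_le_of_le_one_left (Nat.cast_nonneg _) ?_).trans hTk)
      (by positivity)
    exact pow_le_one₀ he.le he1
  exact ⟨{a}, by simpa, {b}, by simpa, by simpa, by simpa, by simpa,
    uniformPair_singleton G he.le a b⟩

/-- Every `T` contains a `ρ`-fraction whose induced subgraph, in `G` or in its complement, has
maximum degree at most an `ε`-fraction. -/
def HasUniformSubsets (G : SimpleGraph V) (ρ ε : ℝ) : Prop :=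
  ∀ T : Finset V, ∃ X ⊆ T, ρ * #T ≤ #X ∧ UniformPair G ε X X

lemma HasUniformSubsets.compl {ρ ε : ℝ} (h : HasUniformSubsets G ρ ε) :
    HasUniformSubsets Gᶜ ρ ε := fun T ↦ by
  obtain ⟨X, hXT, hX, huniform⟩ := h T
  exact ⟨X, hXT, hX, huniform.compl⟩

/-- Rödl's theorem. -/
theorem exists_hasUniformSubsets {k : ℕ} (H : SimpleGraph (Fin k)) {ε : ℝ} (hε : 0 < ε)
    (hε1 : ε ≤ 1) : ∃ ρ : ℝ, 0 < ρ ∧ ρ ≤ 1 ∧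
      ∀ (V : Type u) (G : SimpleGraph V), IsEmpty (H ↪g G) → HasUniformSubsets G ρ ε := by
  set e := ε / 12
  have he : 0 < e := by positivity
  have he1 : e ≤ 1 / 2 := by linarith [show e = ε / 12 from rfl]
  set p := e ^ k / (2 * (k + 1) ^ 2)
  have hp : 0 < p := by positivity
  have hp1 : p ≤ 1 := by
    refine div_le_one_of_le₀ ((pow_le_one₀ he.le (by linarith)).trans ?_) (by positivity)
    nlinarith [Nat.cast_nonneg (α := ℝ) k]
  obtain ⟨t, ht⟩ := pow_unbounded_of_one_lt (1 / e ^ 2) one_lt_two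
  set Q := (2 / (p * p ^ 2 * 1)) ^ t
  have hQ1 : 1 ≤ Q := by
    refine one_le_pow₀ ?_
    rw [one_le_div (by positivity), mul_one, ← pow_succ']
    linarith [pow_le_one₀ hp.le hp1 (n := 2 + 1)]
  refine ⟨Q⁻¹, by positivity, inv_le_one_of_one_le₀ hQ1, fun V G hG T ↦ ?_⟩
  have hskew : HereditarilySkew G 1 (p ^ 2) p p e := fun T hT ↦
    ⟨T, Subset.rfl, by rw [one_mul], fun S' _ hS' ↦
      hasSkewPair_of_isEmpty_embedding hG he (by linarith) (by exact_mod_cast hT.trans hS')⟩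
  obtain ⟨X, hXT, hX, huniform⟩ := hskew.exists_uniformPair he he1 one_pos le_rfl hp hp1 hp.le hp1
    (by positivity) le_rfl (k := 2) (by exact_mod_cast ht.le) T
  refine ⟨X, hXT, (inv_mul_le_iff₀ (by positivity)).2 hX, ?_⟩
  rwa [mul_div_cancel₀ ε (by norm_num)] at huniform

lemma IsSpread.exists_mul_card_le_card_nbhdIn {p d : ℝ} {T : Finset V} (h : IsSpread G p d T)
    (hd : 0 ≤ d) (hp : p ≤ 1 / 4) (hT : 2 ≤ #T) :
    ∃ v ∈ T, d * #T / 4 ≤ #(nbhdIn G v T) := by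
  obtain ⟨A, hAT, hA⟩ := exists_subset_card_eq (s := T) (n := #T / 2) (by lia)
  have hcard := card_sdiff_of_subset hAT
  have hTpos : (0 : ℝ) < #T := by exact_mod_cast (by lia : 0 < #T)
  have hA4 : (#T : ℝ) / 4 ≤ #A := by
    linarith [show (#T : ℝ) ≤ 4 * #A by exact_mod_cast (by lia : #T ≤ 4 * #A)]
  have hlow : #(lowDegIn G d A (T \ A)) < #(T \ A) := by
    have hhalf : (#T : ℝ) ≤ 2 * #(T \ A) := by exact_mod_cast (by lia : #T ≤ 2 * #(T \ A))
    exact_mod_cast (h A hAT (by nlinarith)).trans_le (by linarith : (#T : ℝ) / 50 ≤ #(T \ A))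
  obtain ⟨v, hv, hvlow⟩ := exists_mem_notMem_of_card_lt_card hlow
  refine ⟨v, sdiff_subset hv, ?_⟩
  calc d * #T / 4 = d * (#T / 4) := mul_div_assoc _ _ _
    _ ≤ d * #A := by gcongr
    _ ≤ #(nbhdIn G v A) := mul_card_le_of_notMem_lowDegIn hv hvlow
    _ ≤ #(nbhdIn G v T) := by exact_mod_cast card_nbhdIn_mono G v hAT

lemma isSpread_of_not_hasSkewPair {ρ p κ d : ℝ} {S T : Finset V} (hST : S ⊆ T)
    (hcard : ρ * #T ≤ #S) (hp : 0 ≤ p) (hκ : κ ≤ ρ / 50) (h : ¬ HasSkewPair G (ρ * p) κ d T) :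
    IsSpread G p d S := by
  intro A hAS hpA
  by_contra! hlow
  refine h ⟨A, hAS.trans hST, lowDegIn G d A (S \ A),
    (lowDegIn_subset _ _ _ _).trans (sdiff_subset.trans hST),
    disjoint_sdiff.mono_right (lowDegIn_subset _ _ _ _), ?_, ?_,
    Or.inl (sparseTo_lowDegIn _ _ _ _)⟩
  · calc ρ * p * #T = p * (ρ * #T) := by ring
      _ ≤ p * #S := by gcongr
      _ ≤ #A := hpA
  · calc κ * #T ≤ ρ / 50 * #T := by gcongr
      _ = ρ * #T / 50 := by ring
      _ ≤ #S / 50 := by gcongr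
      _ ≤ #(lowDegIn G d A (S \ A)) := hlow

lemma sparseTo_singleton_nbhdIn_compl {d : ℝ} (hd : 0 ≤ d) (v : V) (T : Finset V) :
    SparseTo G d {v} (nbhdIn Gᶜ v T) := fun b hb ↦ by
  have hvb : ¬ G.Adj b v := fun h ↦ (mem_nbhdIn.1 hb).2.2 h.symm
  simpa [nbhdIn, filter_singleton, hvb] using hd

lemma one_le_mul_card_of_not_hasSkewPair {p κ d : ℝ} {T : Finset V} (hd : 0 ≤ d)
    (hκ : κ ≤ 1 / 50) (hT : 2 ≤ #T) (h : ¬ HasSkewPair G p κ d T) : 1 ≤ p * #T := by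
  by_contra! hp
  obtain ⟨v, hv⟩ := card_pos.1 (by lia : 0 < #T)
  have hdisj (F : SimpleGraph V) : Disjoint {v} (nbhdIn F v T) := by simp [mem_nbhdIn]
  have hcover : (#T : ℝ) ≤ 1 + #(nbhdIn G v T) + #(nbhdIn Gᶜ v T) := by
    have hsub : T ⊆ {v} ∪ nbhdIn G v T ∪ nbhdIn Gᶜ v T := fun x hx ↦ by
      by_cases hvx : v = x
      · simp [hvx]
      · by_cases hadj : G.Adj v x <;> simp [mem_nbhdIn, hx, hvx, hadj]
    have hunion := cast_card_union_le ({v} ∪ nbhdIn G v T) (nbhdIn Gᶜ v T)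
    have hunion' := cast_card_union_le {v} (nbhdIn G v T)
    rw [card_singleton, Nat.cast_one] at hunion'
    linarith [(Nat.cast_le (α := ℝ)).2 (card_le_card hsub)]
  have hT2 : (2 : ℝ) ≤ #T := by exact_mod_cast hT
  have hκT : κ * #T ≤ #T / 50 := by nlinarith
  obtain hG | hGc := le_or_gt (κ * #T) (#(nbhdIn G v T) : ℝ)
  · have hsparse : SparseTo Gᶜ d {v} (nbhdIn G v T) := by
      simpa only [compl_compl] using sparseTo_singleton_nbhdIn_compl (G := Gᶜ) hd v T
    exact h ⟨{v}, by simpa, _, nbhdIn_subset _ _ _, hdisj _, by simpa using hp.le, hG,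
      Or.inr hsparse⟩
  · exact h ⟨{v}, by simpa, _, nbhdIn_subset _ _ _, hdisj _, by simpa using hp.le, by linarith,
      Or.inl (sparseTo_singleton_nbhdIn_compl hd v T)⟩

lemma IsSpread.exists_hasCompletePairs {p d : ℝ} {T : Finset V} (h : IsSpread G p d T)
    (hC : NoInducedC5 G) (hsparse : SparseTo G (1 / 200) T T) (hd : 0 < d) (hd1 : d ≤ 1)
    (hpd : p ≤ d ^ 2 / 8) (hpT : 1 ≤ p * #T) :
    ∃ S ⊆ T, d * #T / 4 ≤ #S ∧ HasCompletePairs G (d ^ 3 / 200) (p * #T) S := by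
  have hp : p ≤ 1 / 8 := by linarith [pow_le_one₀ hd.le hd1 (n := 2)]
  have hT : 2 ≤ #T := by
    exact_mod_cast (by nlinarith [Nat.cast_nonneg (α := ℝ) #T] : (2 : ℝ) ≤ #T)
  obtain ⟨v, hv, hdeg⟩ := h.exists_mul_card_le_card_nbhdIn hd.le (by linarith) hT
  exact ⟨_, nbhdIn_subset G v T, hdeg, h.hasCompletePairs hC hsparse hd hd1 hpd hpT hv⟩

lemma HasCompletePairs.hasSkewPair {d q ρ κ : ℝ} {S : Finset V}
    (h : HasCompletePairs G (d ^ 3 / 200) q S) (hC : NoInducedC5 G)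
    (hρ : HasUniformSubsets G ρ (1 / 200)) (hd : 0 < d) (hd1 : d ≤ 1) (hκ : κ ≤ ρ / 50)
    (hq1 : 1 ≤ q) (hqS : q ≤ d ^ 7 / 10 ^ 7 * (ρ * #S)) :
    HasSkewPair G (ρ * (d ^ 2 / 8)) κ d S := by
  by_contra hno
  obtain ⟨X, hXS, hX, hsparse | hsparse⟩ := hρ S
  all_goals have hqX : q ≤ d ^ 7 / 10 ^ 7 * #X := hqS.trans (by gcongr)
  · refine not_hasCompletePairs_of_sparseTo (h.anti hXS) hC (by positivity)
      (by linarith [pow_le_one₀ hd.le hd1 (n := 3)]) hq1 (hqX.trans ?_) hsparse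
    calc d ^ 7 / 10 ^ 7 * #X ≤ d ^ 6 / 10 ^ 7 * #X := by
          gcongr ?_ / _ * _
          exact pow_le_pow_of_le_one hd.le hd1 (by norm_num)
      _ ≤ (d ^ 3 / 200) ^ 2 * #X / 40 := by
          linarith [show 0 ≤ d ^ 6 * (#X : ℝ) by positivity]
  · have hspread : IsSpread Gᶜ (d ^ 2 / 8) d X :=
      isSpread_of_not_hasSkewPair hXS hX (by positivity) hκ fun hskew ↦
        hno (by simpa only [compl_compl] using hskew.compl)
    have hlarge : 1 ≤ d ^ 2 / 8 * #X := by
      have hpow : d ^ 7 * #X ≤ d ^ 2 * #X := by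
        gcongr ?_ * _
        exact pow_le_pow_of_le_one hd.le hd1 (by norm_num)
      linarith
    obtain ⟨N, hNX, hN, hpairs⟩ := hspread.exists_hasCompletePairs hC.compl hsparse hd hd1 le_rfl
      hlarge
    have hqN : q ≤ d ^ 3 / 200 * #N :=
      calc q ≤ d ^ 7 / 10 ^ 7 * #X := hqX
        _ ≤ d ^ 4 / 10 ^ 7 * #X := by
            gcongr ?_ / _ * _
            exact pow_le_pow_of_le_one hd.le hd1 (by norm_num)
        _ ≤ d ^ 3 / 200 * (d * #X / 4) := by
            linarith [show 0 ≤ d ^ 4 * (#X : ℝ) by positivity]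
        _ ≤ d ^ 3 / 200 * #N := by gcongr
    have hlt := (h.anti (hNX.trans hXS)).card_lt_of_compl hpairs (by positivity) (by linarith) hqN
    have hpow : d ^ 2 * (#X : ℝ) ≤ d * #X := by
      gcongr ?_ * _
      exact pow_le_of_le_one hd.le hd1 two_ne_zero
    linarith [show 0 ≤ d * (#X : ℝ) by positivity]

section NoInducedC5

variable {d ρ κ μ : ℝ} {T : Finset V}

lemma IsSpread.exists_forall_hasSkewPair (h : IsSpread G (ρ * μ * d ^ 8 / (4 * 10 ^ 7)) d T)
    (hC : NoInducedC5 G) (hρ : HasUniformSubsets G ρ (1 / 200))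
    (hsparse : SparseTo G (1 / 200) T T) (hd : 0 < d) (hd1 : d ≤ 1) (hρ0 : 0 < ρ) (hρ1 : ρ ≤ 1)
    (hκ : κ ≤ ρ / 50) (hμ : 0 < μ) (hμ1 : μ ≤ 1)
    (hlarge : 1 ≤ ρ * μ * d ^ 8 / (4 * 10 ^ 7) * #T) :
    ∃ S ⊆ T, d * #T / 4 ≤ #S ∧
      ∀ S' ⊆ S, μ * #S ≤ #S' → HasSkewPair G (ρ * (d ^ 2 / 8)) κ d S' := by
  have hpd : ρ * μ * d ^ 8 / (4 * 10 ^ 7) ≤ d ^ 2 / 8 := by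
    have hpow : ρ * μ * d ^ 8 ≤ 1 * d ^ 2 := by
      gcongr ?_ * ?_
      · exact mul_le_one₀ hρ1 hμ.le hμ1
      · exact pow_le_pow_of_le_one hd.le hd1 (by norm_num)
    linarith [pow_pos hd 2]
  obtain ⟨S, hST, hS, hpairs⟩ := h.exists_hasCompletePairs hC hsparse hd hd1 hpd hlarge
  refine ⟨S, hST, hS, fun S' hS'S hS' ↦
    (hpairs.anti hS'S).hasSkewPair hC hρ hd hd1 hκ hlarge ?_⟩
  calc ρ * μ * d ^ 8 / (4 * 10 ^ 7) * #T = d ^ 7 / 10 ^ 7 * (ρ * (μ * (d * #T / 4))) := by ring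
    _ ≤ d ^ 7 / 10 ^ 7 * (ρ * (μ * #S)) := by gcongr
    _ ≤ d ^ 7 / 10 ^ 7 * (ρ * #S') := by gcongr

lemma exists_forall_hasSkewPair_of_not (hC : NoInducedC5 G)
    (hρ : HasUniformSubsets G ρ (1 / 200)) (hd : 0 < d) (hd1 : d ≤ 1) (hρ0 : 0 < ρ) (hρ1 : ρ ≤ 1)
    (hκ : κ ≤ ρ / 50) (hμ : 0 < μ) (hμ1 : μ ≤ 1) (hT : 2 ≤ #T)
    (h : ¬ HasSkewPair G (ρ * (ρ * μ * d ^ 8 / (4 * 10 ^ 7))) κ d T) :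
    ∃ S ⊆ T, ρ * d / 4 * #T ≤ #S ∧
      ∀ S' ⊆ S, μ * #S ≤ #S' → HasSkewPair G (ρ * (d ^ 2 / 8)) κ d S' := by
  obtain ⟨X, hXT, hX, huniform⟩ := hρ T
  set p := ρ * μ * d ^ 8 / (4 * 10 ^ 7)
  have hp : 0 ≤ p := by positivity
  have hlarge : 1 ≤ p * #X :=
    calc 1 ≤ ρ * p * #T := one_le_mul_card_of_not_hasSkewPair hd.le (by linarith) hT h
      _ = p * (ρ * #T) := by ring
      _ ≤ p * #X := by gcongr
  have hcompl : ¬ HasSkewPair Gᶜ (ρ * p) κ d T := fun h' ↦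
    h (by simpa only [compl_compl] using h'.compl)
  have hcard {S : Finset V} (hS : d * #X / 4 ≤ #S) : ρ * d / 4 * #T ≤ #S :=
    calc ρ * d / 4 * #T = d * (ρ * #T) / 4 := by ring
      _ ≤ d * #X / 4 := by gcongr
      _ ≤ #S := hS
  obtain hsparse | hsparse := huniform
  · have hspread := isSpread_of_not_hasSkewPair hXT hX hp hκ h
    obtain ⟨S, hSX, hS, hskew⟩ := hspread.exists_forall_hasSkewPair hC hρ hsparse hd hd1 hρ0 hρ1
      hκ hμ hμ1 hlarge
    exact ⟨S, hSX.trans hXT, hcard hS, hskew⟩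
  · have hspread := isSpread_of_not_hasSkewPair hXT hX hp hκ hcompl
    obtain ⟨S, hSX, hS, hskew⟩ := hspread.exists_forall_hasSkewPair hC.compl hρ.compl hsparse hd
      hd1 hρ0 hρ1 hκ hμ hμ1 hlarge
    exact ⟨S, hSX.trans hXT, hcard hS, fun S' hS'S hS' ↦ by
      simpa only [compl_compl] using (hskew S' hS'S hS').compl⟩

/-- Either `T` itself will do, or `T` has a large subset `T'` without very skew pairs, and there the
induced `C₅` argument yields a large `S` all of whose large subsets have moderately skew pairs. -/
theorem hereditarilySkew (hC : NoInducedC5 G) (hρ : HasUniformSubsets G ρ (1 / 200)) (hd : 0 < d)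
    (hd1 : d ≤ 1) (hρ0 : 0 < ρ) (hρ1 : ρ ≤ 1) (hκ : κ ≤ ρ / 50) (hμ : 0 < μ) (hμ1 : μ ≤ 1) :
    HereditarilySkew G (ρ * d / 4 * μ) μ (ρ * (ρ * μ * d ^ 8 / (4 * 10 ^ 7))) κ d := by
  intro T hT
  by_cases hall : ∀ S' ⊆ T, μ * #T ≤ #S' →
      HasSkewPair G (ρ * (ρ * μ * d ^ 8 / (4 * 10 ^ 7))) κ d S'
  · refine ⟨T, Subset.rfl, mul_le_of_le_one_left (Nat.cast_nonneg _) ?_, hall⟩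
    have hρd : ρ * d ≤ 1 := mul_le_one₀ hρ1 hd.le hd1
    exact mul_le_one₀ (by linarith) hμ.le hμ1
  push Not at hall
  obtain ⟨T', hT'T, hT', hno⟩ := hall
  obtain ⟨S, hST', hS, hskew⟩ := exists_forall_hasSkewPair_of_not hC hρ hd hd1 hρ0 hρ1 hκ hμ hμ1
    (by exact_mod_cast hT.trans hT') hno
  refine ⟨S, hST'.trans hT'T, ?_, fun S' hS'S hS' ↦ (hskew S' hS'S hS').mono ?_⟩
  · calc ρ * d / 4 * μ * #T = ρ * d / 4 * (μ * #T) := mul_assoc _ _ _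
      _ ≤ ρ * d / 4 * #T' := by gcongr
      _ ≤ #S := hS
  · gcongr ρ * ?_
    have hpow : ρ * μ * d ^ 8 ≤ 1 * d ^ 2 := by
      gcongr ?_ * ?_
      · exact mul_le_one₀ hρ1 hμ.le hμ1
      · exact pow_le_pow_of_le_one hd.le hd1 (by norm_num)
    linarith [pow_pos hd 2]

end NoInducedC5

lemma HasUniformSubsets.exists_uniformPair {ρ d : ℝ} {k t : ℕ}
    (hρ : HasUniformSubsets G ρ (1 / 200)) (hC : NoInducedC5 G) (hρ0 : 0 < ρ) (hρ1 : ρ ≤ 1)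
    (hd : 0 < d) (hd1 : d ≤ 1) (hkt : (12 / d) ^ 2 ≤ (k : ℝ) ^ t) (T : Finset V) :
    ∃ X ⊆ T, (#T : ℝ) ≤ (32 * 10 ^ 7 / ρ ^ 3 * (12 / d) ^ 9 * (50 / ρ) ^ (3 * k)) ^ t * #X ∧
      UniformPair G d X X := by
  have hd' : 0 < d / 12 := by positivity
  have hd1' : d / 12 ≤ 1 / 2 := by linarith
  have hκ : 0 < ρ / 50 := by positivity
  have hκ1 : ρ / 50 ≤ 1 := by linarith
  have hμ1 : (ρ / 50) ^ k ≤ 1 := pow_le_one₀ hκ.le hκ1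
  have hγ1 : ρ * (d / 12) / 4 * (ρ / 50) ^ k ≤ 1 := by
    have hρd : ρ * (d / 12) ≤ 1 := mul_le_one₀ hρ1 hd'.le (by linarith)
    exact mul_le_one₀ (by linarith) (by positivity) hμ1
  have hπ1 : ρ * (ρ * (ρ / 50) ^ k * (d / 12) ^ 8 / (4 * 10 ^ 7)) ≤ 1 := by
    have hprod : ρ * (ρ / 50) ^ k * (d / 12) ^ 8 ≤ 1 :=
      mul_le_one₀ (mul_le_one₀ hρ1 (by positivity) hμ1) (by positivity)
        (pow_le_one₀ hd'.le (by linarith))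
    exact mul_le_one₀ hρ1 (by positivity) (by linarith)
  have hskew := hereditarilySkew (d := d / 12) hC hρ hd' (by linarith) hρ0 hρ1 le_rfl
    (μ := (ρ / 50) ^ k) (by positivity) hμ1
  obtain ⟨X, hXT, hX, huniform⟩ := hskew.exists_uniformPair hd' hd1' (by positivity) hγ1
    (by positivity) hπ1 hκ.le hκ1 (by positivity) le_rfl
    (by rwa [← one_div_pow, one_div_div]) T
  refine ⟨X, hXT, hX.trans_eq ?_, by rwa [mul_div_cancel₀ d (by norm_num)] at huniform⟩
  congr 2
  rw [← inv_div ρ 50, inv_pow, pow_mul']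
  field_simp
  norm_num

lemma exists_two_rpow_le_pow {L : ℝ} (hL : 2 ≤ L) :
    ∃ k t : ℕ, k ≤ 2 * L ∧ t ≤ 7 * L / Real.logb 2 L ∧ (2 : ℝ) ^ (6 * L) ≤ (k : ℝ) ^ t := by
  set l := Real.logb 2 L
  have hl : 0 < l := Real.logb_pos one_lt_two (by linarith)
  have hl_le : l ≤ L := by
    rw [Real.logb_le_iff_le_rpow one_lt_two (by linarith)]
    have hbernoulli := one_add_mul_self_le_rpow_one_add (s := 1) (by norm_num) (p := L)
      (by linarith)
    norm_num at hbernoulli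
    linarith
  refine ⟨⌈L⌉₊, ⌈6 * L / l⌉₊, ?_, ?_, ?_⟩
  · linarith [Nat.ceil_lt_add_one (by linarith : 0 ≤ L)]
  · have hceil := Nat.ceil_lt_add_one (by positivity : 0 ≤ 6 * L / l)
    have hone : 1 ≤ L / l := (one_le_div hl).2 hl_le
    linarith [show 7 * L / l = 6 * L / l + L / l by ring]
  · calc (2 : ℝ) ^ (6 * L) = 2 ^ (l * (6 * L / l)) := by rw [mul_div_cancel₀ _ hl.ne']
      _ ≤ 2 ^ (l * ⌈6 * L / l⌉₊) := by
          gcongr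
          · norm_num
          · exact Nat.le_ceil _
      _ = L ^ ⌈6 * L / l⌉₊ := by
          rw [Real.rpow_mul_natCast zero_le_two, Real.rpow_logb two_pos (by norm_num) (by linarith)]
      _ ≤ (⌈L⌉₊ : ℝ) ^ ⌈6 * L / l⌉₊ := by
          gcongr
          exact Nat.le_ceil L

lemma twelve_div_le_two_rpow {d : ℝ} (hd : 0 < d) (hd4 : d ≤ 1 / 4) :
    12 / d ≤ (2 : ℝ) ^ (3 * Real.logb 2 (1 / d)) := by
  have hinv : 4 ≤ 1 / d := (le_div_iff₀ hd).2 (by linarith)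
  rw [mul_comm, Real.rpow_mul zero_le_two, Real.rpow_logb two_pos (by norm_num) (by positivity)]
  calc 12 / d = 12 * (1 / d) := by ring
    _ ≤ (1 / d) ^ 2 * (1 / d) := by gcongr; nlinarith
    _ = (1 / d) ^ (3 : ℝ) := by norm_cast

lemma mul_pow_mul_pow_le_two_rpow {b c x L : ℝ} {k : ℕ} (hb : 1 ≤ b) (hc : 1 ≤ c) (hx : 0 ≤ x)
    (hxL : x ≤ 2 ^ (3 * L)) (hL : 1 ≤ L) (hk : k ≤ 2 * L) :
    b * x ^ 9 * c ^ (3 * k) ≤ 2 ^ ((Real.logb 2 b + 27 + 6 * Real.logb 2 c) * L) := by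
  have hc0 : 0 ≤ Real.logb 2 c := Real.logb_nonneg one_lt_two hc
  have hbL : b ≤ 2 ^ (Real.logb 2 b * L) := by
    rw [Real.rpow_mul zero_le_two, Real.rpow_logb two_pos (by norm_num) (by linarith)]
    exact Real.self_le_rpow_of_one_le hb hL
  have hxL' : x ^ 9 ≤ 2 ^ (27 * L) :=
    calc x ^ 9 ≤ (2 ^ (3 * L)) ^ 9 := by gcongr
      _ = 2 ^ (27 * L) := by rw [← Real.rpow_mul_natCast zero_le_two]; ring_nf
  have hcL : c ^ (3 * k) ≤ 2 ^ (6 * Real.logb 2 c * L) :=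
    calc c ^ (3 * k) = 2 ^ (Real.logb 2 c * (3 * k : ℕ)) := by
          rw [Real.rpow_mul_natCast zero_le_two,
            Real.rpow_logb two_pos (by norm_num) (by linarith)]
      _ ≤ 2 ^ (6 * Real.logb 2 c * L) := by
          refine Real.rpow_le_rpow_of_exponent_le one_le_two ?_
          push_cast
          nlinarith
  calc b * x ^ 9 * c ^ (3 * k)
      ≤ 2 ^ (Real.logb 2 b * L) * 2 ^ (27 * L) * 2 ^ (6 * Real.logb 2 c * L) := by gcongr
    _ = 2 ^ ((Real.logb 2 b + 27 + 6 * Real.logb 2 c) * L) := by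
        rw [← Real.rpow_add two_pos, ← Real.rpow_add two_pos]
        ring_nf

lemma exists_mul_pow_mul_pow_le_two_rpow {b c : ℝ} (hb : 1 ≤ b) (hc : 1 ≤ c) :
    ∃ C : ℝ, 0 < C ∧ ∀ d : ℝ, 0 < d → d ≤ 1 / 4 → ∃ k t : ℕ, (12 / d) ^ 2 ≤ (k : ℝ) ^ t ∧
      (b * (12 / d) ^ 9 * c ^ (3 * k)) ^ t ≤
        2 ^ (C * Real.logb 2 (1 / d) ^ 2 / Real.logb 2 (Real.logb 2 (1 / d))) := by
  set e := Real.logb 2 b + 27 + 6 * Real.logb 2 c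
  have he : 0 < e := by
    have := Real.logb_nonneg one_lt_two hb
    have := Real.logb_nonneg one_lt_two hc
    positivity
  refine ⟨7 * e, by positivity, fun d hd hd4 ↦ ?_⟩
  have hd12 := twelve_div_le_two_rpow hd hd4
  have hL : 2 ≤ Real.logb 2 (1 / d) := by
    rw [Real.le_logb_iff_rpow_le one_lt_two (by positivity), le_div_iff₀ hd]
    norm_num
    linarith
  set L := Real.logb 2 (1 / d)
  obtain ⟨k, t, hk, ht, hkt⟩ := exists_two_rpow_le_pow hL
  refine ⟨k, t, ?_, ?_⟩
  · calc (12 / d) ^ 2 ≤ (2 ^ (3 * L)) ^ 2 := by gcongr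
      _ = 2 ^ (6 * L) := by rw [← Real.rpow_mul_natCast zero_le_two]; ring_nf
      _ ≤ (k : ℝ) ^ t := hkt
  · calc (b * (12 / d) ^ 9 * c ^ (3 * k)) ^ t
        ≤ (2 ^ (e * L)) ^ t := by
          gcongr
          exact mul_pow_mul_pow_le_two_rpow hb hc (by positivity) hd12 (by linarith) hk
      _ = 2 ^ (e * L * t) := (Real.rpow_mul_natCast zero_le_two _ _).symm
      _ ≤ 2 ^ (e * L * (7 * L / Real.logb 2 L)) := by
          gcongr
          norm_num
      _ = 2 ^ (7 * e * L ^ 2 / Real.logb 2 L) := by ring_nf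

theorem rodl_c5_improved_general :
    ∃ C : ℝ, 0 < C ∧ ∀ d : ℝ, 0 < d → d ≤ 1 / 4 →
      ∀ (V : Type u) (G : SimpleGraph V), IsEmpty (cycleGraph 5 ↪g G) → HasUniformSubsets G
        (2 ^ (-(C * Real.logb 2 (1 / d) ^ 2 / Real.logb 2 (Real.logb 2 (1 / d))))) d := by
  obtain ⟨ρ, hρ0, hρ1, hρ⟩ := exists_hasUniformSubsets.{u} (cycleGraph 5) (ε := 1 / 200)
    (by norm_num) (by norm_num)
  obtain ⟨C, hC, hloss⟩ := exists_mul_pow_mul_pow_le_two_rpow (b := 32 * 10 ^ 7 / ρ ^ 3)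
    (c := 50 / ρ) ((one_le_div (by positivity)).2 (by linarith [pow_le_one₀ hρ0.le hρ1 (n := 3)]))
    ((one_le_div hρ0).2 (by linarith))
  refine ⟨C, hC, fun d hd hd4 V G hfree T ↦ ?_⟩
  obtain ⟨k, t, hkt, hQ⟩ := hloss d hd hd4
  obtain ⟨X, hXT, hX, huniform⟩ := (hρ V G hfree).exists_uniformPair
    (noInducedC5_of_isEmpty hfree) hρ0 hρ1 hd (by linarith) hkt T
  refine ⟨X, hXT, ?_, huniform⟩
  rw [Real.rpow_neg zero_le_two, inv_mul_le_iff₀ (by positivity)]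
  exact hX.trans (by gcongr)

end Development

/-- Improved Rödl theorem for `C₅`: there is `C > 0` such that for every `0 < d ≤ 1/4`,
with `δ = 2 ^ (-C(log(1/d))²/(log log (1/d)))` (logs base 2), every `C₅`-free graph `G`
has a set `X` of at least `δ|V(G)|` vertices such that in one of `G[X]` or the complement
of `G` induced on `X`, every vertex has degree at most `d|X|`. -/
theorem rodl_c5_improved :
    ∃ C : ℝ, 0 < C ∧
      ∀ d : ℝ, 0 < d → d ≤ 1 / 4 →
        ∀ (n : ℕ) (G : SimpleGraph (Fin n)), C5Free G →
          ∃ X : Finset (Fin n),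
            (2 : ℝ) ^ (-(C * (Real.logb 2 (1 / d)) ^ 2 /
                Real.logb 2 (Real.logb 2 (1 / d)))) * n ≤ (X.card : ℝ) ∧
            ((∀ v ∈ X, ((X.filter (fun u => G.Adj v u)).card : ℝ) ≤ d * X.card) ∨
             (∀ v ∈ X, ((X.filter (fun u => Gᶜ.Adj v u)).card : ℝ) ≤ d * X.card)) := by
  obtain ⟨C, hC, h⟩ := rodl_c5_improved_general
  refine ⟨C, hC, fun d hd hd4 n G hfree ↦ ?_⟩
  obtain ⟨X, -, hX, huniform⟩ := h d hd hd4 _ G (not_nonempty_iff.1 hfree) Finset.univ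
  rw [Finset.card_univ, Fintype.card_fin] at hX
  refine ⟨X, hX, huniform.imp id fun hsparse v hv ↦ ?_⟩
  convert hsparse v hv
  ext; simp [mem_nbhdIn]
end

section
/- Let 𝓘 be a hereditary class of graphs, let σ ≥ 0 and 0 < ε ≤ 1, and suppose that for every graph G ∈ 𝓘 with n ≥ 2 vertices and every real c with 0 ≤ c ≤ 1/2 there exist disjoint nonempty subsets A, B ⊆ V(G) with |A| ≥ c^σ·n and |B| ≥ ε·n such that the edge-density between A and B is either at most c or at least 1 − c. Then there exists κ > 0 such that every graph G ∈ 𝓘 with n ≥ 2 vertices contains an induced subgraph that is a cograph with at least 2^{κ·√(log n · log log n)} vertices. -/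
open SimpleGraph
open scoped Classical

/-- A cograph is a graph with no induced path on 4 vertices. -/
def IsCograph {V : Type} (G : SimpleGraph V) : Prop :=
  ¬ Nonempty (pathGraph 4 ↪g G)

/-- A class of graphs (one predicate for each number of vertices) is hereditary if it is
closed under isomorphic copies of induced subgraphs. -/
def Hereditary (I : ∀ n : ℕ, SimpleGraph (Fin n) → Prop) : Prop :=
  ∀ (m n : ℕ) (G : SimpleGraph (Fin n)) (H : SimpleGraph (Fin m)),
    I n G → Nonempty (H ↪g G) → I m H

/-!
Let `f m` be the largest `k` such that every `m`-vertex set of `G` contains an induced cograph on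
`k` vertices. A pair `(A, B)` of density at most `1 / (4 * t)` in `G` or in its complement can be
cleaned up: half of `A` has few neighbours in `B`, and any cograph on at most `t` vertices of that
half is anticomplete to half of `B`. Gluing this cograph to one found in that half of `B` gives
`f m ≥ f (α * m) + f (β * m)` as long as `f (α * m) ≤ t`, where `α = t ^ (-O(1))` and `β` is a
constant. Peeling off `p` constant fractions multiplies `f` by `p` at the cost of a factor
`α * β ^ p` in `m`, which is `2 ^ (-O(p))` for `t = 2 ^ p`. After `r` rounds, any `2 ^ O(p * r)`
vertices contain a cograph on `min (2 ^ p) (p ^ r)` vertices. The two terms are balanced by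
`p ≈ √(log n * log log n)` and `r ≈ log n / p`.
-/

open Filter
open scoped Finset

section Cographs

variable {V : Type} {G : SimpleGraph V}

lemma isCograph_induce_iff {s : Set V} :
    IsCograph (G.induce s) ↔ ∀ f : pathGraph 4 ↪g G, ¬ Set.range f ⊆ s := by
  constructor
  · intro hs f hf
    exact hs ⟨RelEmbedding.codRestrict s f fun i => hf ⟨i, rfl⟩⟩
  · rintro hs ⟨f⟩
    refine hs ((Embedding.induce s).comp f) ?_
    rintro _ ⟨i, rfl⟩
    exact (f i).2

lemma IsCograph.induce_mono {s t : Set V} (hst : s ⊆ t) (ht : IsCograph (G.induce t)) :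
    IsCograph (G.induce s) :=
  isCograph_induce_iff.2 fun f hf => isCograph_induce_iff.1 ht f (hf.trans hst)

lemma isCograph_induce_of_card_lt_four {s : Finset V} (hs : #s < 4) :
    IsCograph (G.induce (s : Set V)) := by
  rintro ⟨f⟩
  have hcard := Fintype.card_le_of_injective f f.injective
  simp only [Fintype.card_fin, Finset.coe_sort_coe, Fintype.card_coe] at hcard
  lia

lemma forall_mem_or_forall_notMem_of_pathGraph_four_adj_iff {s : Set (Fin 4)} {p : Prop}
    (hs : ∀ i ∈ s, ∀ j ∉ s, ((pathGraph 4).Adj i j ↔ p)) :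
    (∀ i, i ∈ s) ∨ ∀ i, i ∉ s := by
  have mem_iff {i j : Fin 4} (hij : ¬ ((pathGraph 4).Adj i j ↔ p)) : i ∈ s ↔ j ∈ s := by
    have hji : ¬ ((pathGraph 4).Adj j i ↔ p) := by rwa [adj_comm]
    exact ⟨fun hi => by_contra fun hj => hij (hs i hi j hj),
      fun hj => by_contra fun hi => hji (hs j hj i hi)⟩
  simp only [pathGraph_adj] at mem_iff
  suffices hconst : (0 ∈ s ∧ 1 ∈ s ∧ 2 ∈ s ∧ 3 ∈ s) ∨ (0 ∉ s ∧ 1 ∉ s ∧ 2 ∉ s ∧ 3 ∉ s) by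
    simpa [Fin.forall_fin_succ] using hconst
  -- Membership in `s` is constant along the path `1 - 3 - 0 - 2` of the complement if `p` holds,
  -- and along the path `0 - 1 - 2 - 3` otherwise.
  by_cases hp : p
  · have h13 : (1 : Fin 4) ∈ s ↔ 3 ∈ s := mem_iff (by simp [hp])
    have h30 : (3 : Fin 4) ∈ s ↔ 0 ∈ s := mem_iff (by simp [hp])
    have h02 : (0 : Fin 4) ∈ s ↔ 2 ∈ s := mem_iff (by simp [hp])
    tauto
  · have h01 : (0 : Fin 4) ∈ s ↔ 1 ∈ s := mem_iff (by simp [hp])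
    have h12 : (1 : Fin 4) ∈ s ↔ 2 ∈ s := mem_iff (by simp [hp])
    have h23 : (2 : Fin 4) ∈ s ↔ 3 ∈ s := mem_iff (by simp [hp])
    tauto

lemma IsCograph.induce_union {s t : Set V} {p : Prop} (hs : IsCograph (G.induce s))
    (ht : IsCograph (G.induce t)) (hst : ∀ a ∈ s, ∀ b ∈ t, (G.Adj a b ↔ p)) :
    IsCograph (G.induce (s ∪ t)) := by
  rw [isCograph_induce_iff] at hs ht ⊢
  intro f hf
  have mem_t_of_notMem_s (i) (hi : f i ∉ s) : f i ∈ t := (hf ⟨i, rfl⟩).resolve_left hi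
  have adj_iff : ∀ i ∈ f ⁻¹' s, ∀ j ∉ f ⁻¹' s, ((pathGraph 4).Adj i j ↔ p) := fun i hi j hj => by
    rw [← f.map_adj_iff, hst _ hi _ (mem_t_of_notMem_s j hj)]
  rcases forall_mem_or_forall_notMem_of_pathGraph_four_adj_iff adj_iff with hmem | hnotMem
  · exact hs f (Set.range_subset_iff.2 hmem)
  · exact ht f (Set.range_subset_iff.2 fun i => mem_t_of_notMem_s i (hnotMem i))

end Cographs

section SparsePairs

variable {α β : Type*} {r : α → β → Prop} [∀ a, DecidablePred (r a)] {A : Finset α} {B : Finset β}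

lemma card_interedges_eq_sum_card_filter :
    #(Rel.interedges r A B) = ∑ a ∈ A, #{b ∈ B | r a b} := by
  simp only [Rel.interedges, Finset.card_filter, Finset.sum_product]

lemma card_le_two_mul_card_filter_of_edgeDensity_le {c : ℚ} (hc : 0 < c)
    (hr : Rel.edgeDensity r A B ≤ c) :
    #A ≤ 2 * #{a ∈ A | (#{b ∈ B | r a b} : ℚ) ≤ 2 * c * #B} := by
  rcases B.eq_empty_or_nonempty with rfl | hB
  · simp only [Finset.filter_empty, Finset.card_empty, Nat.cast_zero, mul_zero, le_refl,
      Finset.filter_true]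
    lia
  rcases A.eq_empty_or_nonempty with rfl | hA
  · simp
  set heavy := {a ∈ A | ¬ (#{b ∈ B | r a b} : ℚ) ≤ 2 * c * #B}
  have hBpos : (0 : ℚ) < #B := mod_cast hB.card_pos
  have : (0 : ℚ) < #A := mod_cast hA.card_pos
  have hheavy : (#heavy : ℚ) * (2 * c * #B) ≤ c * (#A * #B) := by
    calc (#heavy : ℚ) * (2 * c * #B)
        ≤ ∑ a ∈ heavy, (#{b ∈ B | r a b} : ℚ) := by
          rw [← nsmul_eq_mul]
          exact Finset.card_nsmul_le_sum _ _ _ fun a ha => (not_le.1 (Finset.mem_filter.1 ha).2).le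
      _ ≤ ∑ a ∈ A, (#{b ∈ B | r a b} : ℚ) :=
          Finset.sum_le_sum_of_subset_of_nonneg (Finset.filter_subset _ _)
            fun _ _ _ => Nat.cast_nonneg _
      _ = #(Rel.interedges r A B) := by rw [card_interedges_eq_sum_card_filter, Nat.cast_sum]
      _ ≤ c * (#A * #B) := (div_le_iff₀ (by positivity)).1 hr
  have hhalf : 2 * #heavy ≤ #A := by
    have : (2 * #heavy : ℚ) ≤ #A := by
      refine le_of_mul_le_mul_left ?_ (mul_pos hc hBpos)
      linarith
    exact_mod_cast this
  have := Finset.card_filter_add_card_filter_not (s := A)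
    fun a => (#{b ∈ B | r a b} : ℚ) ≤ 2 * c * #B
  lia

lemma card_sub_card_mul_le_card_filter_forall_not {S : Finset α} {d : ℚ}
    (hS : ∀ a ∈ S, (#{b ∈ B | r a b} : ℚ) ≤ d) :
    (#B : ℚ) - #S * d ≤ #{b ∈ B | ∀ a ∈ S, ¬ r a b} := by
  have hcover : B ⊆ {b ∈ B | ∀ a ∈ S, ¬ r a b} ∪ S.biUnion fun a => {b ∈ B | r a b} := by
    intro b hb
    simp only [Finset.mem_union, Finset.mem_filter, Finset.mem_biUnion]
    grind
  have hcard : #B ≤ #{b ∈ B | ∀ a ∈ S, ¬ r a b} + ∑ a ∈ S, #{b ∈ B | r a b} :=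
    (Finset.card_le_card hcover).trans <| (Finset.card_union_le _ _).trans <| by
      gcongr
      exact Finset.card_biUnion_le
  have hsum : ∑ a ∈ S, (#{b ∈ B | r a b} : ℚ) ≤ #S * d :=
    (Finset.sum_le_card_nsmul _ _ _ hS).trans_eq (nsmul_eq_mul _ _)
  have hcard' : (#B : ℚ) ≤ #{b ∈ B | ∀ a ∈ S, ¬ r a b} + ∑ a ∈ S, (#{b ∈ B | r a b} : ℚ) :=
    mod_cast hcard
  linarith

lemma exists_subset_forall_card_le_exists_subset_forall_not {t : ℕ} (ht : 0 < t)
    (hr : Rel.edgeDensity r A B ≤ 1 / (4 * t)) :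
    ∃ A' ⊆ A, #A ≤ 2 * #A' ∧ ∀ S ⊆ A', #S ≤ t →
      ∃ B' ⊆ B, #B ≤ 2 * #B' ∧ ∀ a ∈ S, ∀ b ∈ B', ¬ r a b := by
  have : (0 : ℚ) < t := mod_cast ht
  refine ⟨_, Finset.filter_subset _ _,
    card_le_two_mul_card_filter_of_edgeDensity_le (by positivity) hr, fun S hS hSt => ?_⟩
  refine ⟨{b ∈ B | ∀ a ∈ S, ¬ r a b}, Finset.filter_subset _ _, ?_,
    fun a ha b hb => (Finset.mem_filter.1 hb).2 a ha⟩
  have hfew := card_sub_card_mul_le_card_filter_forall_not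
    (fun a ha => (Finset.mem_filter.1 (hS ha)).2)
  have hhalf : #S * (2 * (1 / (4 * t)) * #B) ≤ (#B / 2 : ℚ) :=
    calc #S * (2 * (1 / (4 * t)) * #B) ≤ (t * (2 * (1 / (4 * t)) * #B) : ℚ) := by gcongr
      _ = #B / 2 := by field_simp; norm_num
  have : (#B : ℚ) ≤ 2 * #{b ∈ B | ∀ a ∈ S, ¬ r a b} := by linarith
  exact_mod_cast this

end SparsePairs

section NearlyPurePairs

variable {V W : Type} {G : SimpleGraph V} {A B : Finset V} {c : ℚ}

/-- The pair `(A, B)` is within density `c` of having no edges, or of having all edges. -/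
def IsNearlyPure (G : SimpleGraph V) (c : ℚ) (A B : Finset V) : Prop :=
  G.edgeDensity A B ≤ c ∨ 1 - c ≤ G.edgeDensity A B

/-- Every vertex set of size at least two contains a nearly pure pair whose two sides have at
least a fraction `1 / M`, respectively `1 / N`, of its vertices. The reciprocals are used in order
to stay in the natural numbers. -/
def HasNearlyPurePairs (G : SimpleGraph V) (c : ℚ) (M N : ℕ) : Prop :=
  ∀ U : Finset V, 2 ≤ #U → ∃ A ⊆ U, ∃ B ⊆ U, Disjoint A B ∧
    #U ≤ M * #A ∧ #U ≤ N * #B ∧ IsNearlyPure G c A B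

lemma IsNearlyPure.exists_edgeDensity_not_iff_le (hA : A.Nonempty) (hB : B.Nonempty)
    (hAB : IsNearlyPure G c A B) :
    ∃ p : Prop, Rel.edgeDensity (fun a b => ¬ (G.Adj a b ↔ p)) A B ≤ c := by
  rcases hAB with hsparse | hdense
  · exact ⟨False, by simpa [SimpleGraph.edgeDensity] using hsparse⟩
  · have hsum := Rel.edgeDensity_add_edgeDensity_compl G.Adj hA hB
    rw [SimpleGraph.edgeDensity] at hdense
    refine ⟨True, ?_⟩
    simp only [iff_true]
    linarith

lemma edgeDensity_comap (G : SimpleGraph V) (e : W ↪ V) (A B : Finset W)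
    [DecidableRel G.Adj] [DecidableRel (G.comap e).Adj] :
    (G.comap e).edgeDensity A B = G.edgeDensity (A.map e) (B.map e) := by
  have hinteredges : G.interedges (A.map e) (B.map e) =
      ((G.comap e).interedges A B).map (e.prodMap e) := by
    ext ⟨x, y⟩
    simp only [SimpleGraph.mem_interedges_iff, Finset.mem_map, Prod.exists, comap_adj,
      Function.Embedding.coe_prodMap, Prod.map_apply, Prod.mk.injEq]
    grind
  rw [SimpleGraph.edgeDensity_def, SimpleGraph.edgeDensity_def, hinteredges]
  simp only [Finset.card_map]

lemma Hereditary.hasNearlyPurePairs {I : ∀ n : ℕ, SimpleGraph (Fin n) → Prop} (hI : Hereditary I)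
    {M N : ℕ} (hpairs : ∀ (n : ℕ) (G : SimpleGraph (Fin n)), 2 ≤ n → I n G →
      ∃ A B : Finset (Fin n), Disjoint A B ∧ n ≤ M * #A ∧ n ≤ N * #B ∧ IsNearlyPure G c A B)
    {n : ℕ} {G : SimpleGraph (Fin n)} (hG : I n G) : HasNearlyPurePairs G c M N := by
  intro U hU
  let e : Fin #U ↪ Fin n := (U.orderEmbOfFin rfl).toEmbedding
  have map_subset (A : Finset (Fin #U)) : A.map e ⊆ U := fun x hx => by
    obtain ⟨i, -, rfl⟩ := Finset.mem_map.1 hx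
    exact U.orderEmbOfFin_mem rfl i
  have hH : I #U (G.comap e) := hI _ _ G _ hG ⟨Embedding.comap e G⟩
  obtain ⟨A, B, hAB, hA, hB, hpure⟩ := hpairs _ _ hU hH
  refine ⟨A.map e, map_subset A, B.map e, map_subset B, (Finset.disjoint_map e).2 hAB, ?_, ?_, ?_⟩
  · rwa [Finset.card_map]
  · rwa [Finset.card_map]
  · rwa [IsNearlyPure, edgeDensity_comap] at hpure

end NearlyPurePairs

section Forcing

variable {V : Type} {G : SimpleGraph V}

/-- Every set of at least `m` vertices of `G` contains at least `k` vertices inducing a cograph. -/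
def ForcesCograph (G : SimpleGraph V) (m k : ℕ) : Prop :=
  ∀ U : Finset V, m ≤ #U → ∃ S ⊆ U, k ≤ #S ∧ IsCograph (G.induce (S : Set V))

namespace ForcesCograph

lemma mono {m m' k k' : ℕ} (hG : ForcesCograph G m k) (hm : m ≤ m') (hk : k' ≤ k) :
    ForcesCograph G m' k' := fun U hU =>
  let ⟨S, hSU, hkS, hS⟩ := hG U (hm.trans hU)
  ⟨S, hSU, hk.trans hkS, hS⟩

lemma of_lt_four {m k : ℕ} (hkm : k ≤ m) (hk : k < 4) : ForcesCograph G m k := fun _ hU =>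
  let ⟨S, hSU, hS⟩ := Finset.exists_subset_card_eq (hkm.trans hU)
  ⟨S, hSU, hS.ge, isCograph_induce_of_card_lt_four (hS.trans_lt hk)⟩

variable {M N t : ℕ}

lemma add (hG : HasNearlyPurePairs G (1 / (4 * t)) M N) {m x y a b : ℕ} (hm : 2 ≤ m)
    (hx : 2 * M * x ≤ m) (hy : 2 * N * y ≤ m) (ht : 0 < t) (hat : a ≤ t)
    (ha : ForcesCograph G x a) (hb : ForcesCograph G y b) : ForcesCograph G m (a + b) := by
  intro U hU
  obtain ⟨A, hAU, B, hBU, hAB, hA, hB, hpure⟩ := hG U (hm.trans hU)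
  have hApos : 0 < M * #A := by lia
  have hBpos : 0 < N * #B := by lia
  have hAx : 2 * x ≤ #A := by
    refine Nat.le_of_mul_le_mul_left ?_ (Nat.pos_of_mul_pos_right hApos)
    lia
  have hBy : 2 * y ≤ #B := by
    refine Nat.le_of_mul_le_mul_left ?_ (Nat.pos_of_mul_pos_right hBpos)
    lia
  obtain ⟨p, hp⟩ := hpure.exists_edgeDensity_not_iff_le
    (Finset.card_pos.1 (Nat.pos_of_mul_pos_left hApos))
    (Finset.card_pos.1 (Nat.pos_of_mul_pos_left hBpos))
  obtain ⟨A', hA'A, hA', hclean⟩ := exists_subset_forall_card_le_exists_subset_forall_not ht hp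
  obtain ⟨S₀, hS₀A', haS₀, hS₀⟩ := ha A' (by lia)
  obtain ⟨S, hSS₀, rfl⟩ := Finset.exists_subset_card_eq haS₀
  obtain ⟨B', hB'B, hB', hanti⟩ := hclean S (hSS₀.trans hS₀A') hat
  obtain ⟨T, hTB', hbT, hT⟩ := hb B' (by lia)
  have hSA : S ⊆ A := hSS₀.trans (hS₀A'.trans hA'A)
  have hTB : T ⊆ B := hTB'.trans hB'B
  refine ⟨S ∪ T, Finset.union_subset (hSA.trans hAU) (hTB.trans hBU), ?_, ?_⟩
  · rw [Finset.card_union_of_disjoint (Finset.disjoint_of_subset_left hSA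
      (Finset.disjoint_of_subset_right hTB hAB))]
    lia
  · rw [Finset.coe_union]
    exact (hS₀.induce_mono (Finset.coe_subset.2 hSS₀)).induce_union hT
      fun s hs b hb => not_not.1 (hanti s hs b (hTB' hb))

lemma mul (hG : HasNearlyPurePairs G (1 / (4 * t)) M N) (hM : 0 < M) (hN : 0 < N) {x a : ℕ}
    (hx : 2 ≤ x) (ht : 0 < t) (hat : a ≤ t) (ha : ForcesCograph G x a) (j : ℕ) :
    ForcesCograph G (2 * M * (2 * N) ^ j * x) (j * a) := by
  induction j with
  | zero => exact of_lt_four (by simp) (by simp)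
  | succ j ih =>
    have hfactor : 0 < 2 * M * (2 * N) ^ (j + 1) := by positivity
    rw [add_one_mul, add_comm (j * a)]
    refine add hG ?_ ?_ ?_ ht hat ha ih
    · exact hx.trans (Nat.le_mul_of_pos_left x hfactor)
    · exact Nat.mul_le_mul_right x (Nat.le_mul_of_pos_right _ (by positivity))
    · exact (by ring : 2 * N * (2 * M * (2 * N) ^ j * x) = _).le

lemma min_pow (hG : HasNearlyPurePairs G (1 / (4 * t)) M N) (hM : 0 < M) (hN : 0 < N)
    (ht : 0 < t) {p : ℕ} (hp : 0 < p) (r : ℕ) :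
    ForcesCograph G ((2 * M * (2 * N) ^ p) ^ r * 2) (min t (p ^ r)) := by
  induction r with
  | zero => exact of_lt_four (by simp) (by simp)
  | succ r ih =>
    have hsize : 2 ≤ (2 * M * (2 * N) ^ p) ^ r * 2 := Nat.le_mul_of_pos_left 2 (by positivity)
    have hmul := mul hG hM hN hsize ht (min_le_left _ _) ih p
    refine hmul.mono (by ring_nf; rfl) ?_
    rw [← Nat.mul_min_mul_left, pow_succ']
    exact min_le_min_right _ (Nat.le_mul_of_pos_left t hp)

lemma two_pow_min_two_pow_pow {s d p : ℕ} (hp : 0 < p)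
    (hG : HasNearlyPurePairs G (1 / (4 * (2 ^ p : ℕ))) (2 ^ (s * (p + 2))) (2 ^ d)) (r : ℕ) :
    ForcesCograph G (2 ^ ((3 * s + d + 2) * p * r + 1)) (min (2 ^ p) (p ^ r)) := by
  refine (min_pow hG (by positivity) (by positivity) (by positivity) hp r).mono ?_ le_rfl
  have hexp : 1 + s * (p + 2) + (1 + d) * p ≤ (3 * s + d + 2) * p := by nlinarith
  calc (2 * 2 ^ (s * (p + 2)) * (2 * 2 ^ d) ^ p) ^ r * 2
      = 2 ^ ((1 + s * (p + 2) + (1 + d) * p) * r + 1) := by ring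
    _ ≤ 2 ^ ((3 * s + d + 2) * p * r + 1) := by gcongr; norm_num

end ForcesCograph

end Forcing

section Parameters

lemma le_mul_of_one_div_le_of_mul_le {δ : ℝ} {n a M : ℕ} (hM : 0 < M) (hδ : 1 / M ≤ δ)
    (hna : δ * n ≤ a) : n ≤ M * a := by
  have : (0 : ℝ) < M := mod_cast hM
  have : (n : ℝ) ≤ M * a :=
    calc (n : ℝ) = M * (1 / M * n) := by field_simp
      _ ≤ M * (δ * n) := by gcongr
      _ ≤ M * a := by gcongr
  exact_mod_cast this

lemma pow_mul_le_pow_rpow {x σ : ℝ} {s : ℕ} (hx0 : 0 < x) (hx1 : x ≤ 1) (hσs : σ ≤ s) (q : ℕ) :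
    x ^ (s * q) ≤ (x ^ q) ^ σ := by
  rw [mul_comm, pow_mul, ← Real.rpow_natCast _ s]
  exact Real.rpow_le_rpow_of_exponent_ge (by positivity) (pow_le_one₀ hx0.le hx1) hσs

lemma sqrt_mul_logb_two_le_self {x : ℝ} (hx : 1 ≤ x) : √(x * Real.logb 2 x) ≤ x := by
  have hpow : x ≤ 2 ^ x := by
    have := one_add_mul_self_le_rpow_one_add (s := 1) (by norm_num) hx
    norm_num at this
    linarith
  have hlog : Real.logb 2 x ≤ x :=
    (Real.logb_le_iff_le_rpow (by norm_num) (by linarith)).2 hpow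
  exact Real.sqrt_le_iff.2 ⟨by linarith, by nlinarith⟩

lemma eventually_mul_sqrt_mul_logb_two_le (C : ℝ) :
    ∀ᶠ x : ℝ in atTop, C * √(x * Real.logb 2 x) ≤ x / 2 := by
  have hlittle := (Real.isLittleO_logb_id_atTop (b := 2)).const_mul_left (C ^ 2)
  filter_upwards [hlittle.bound (c := 1 / 4) (by norm_num), eventually_ge_atTop 1] with x hbound hx
  have hlog : 0 ≤ Real.logb 2 x := Real.logb_nonneg (by norm_num) hx
  rw [Real.norm_of_nonneg (by positivity), id, Real.norm_of_nonneg (by linarith)] at hbound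
  refine (le_abs_self _).trans (abs_le_of_sq_le_sq ?_ (by linarith))
  calc (C * √(x * Real.logb 2 x)) ^ 2 = x * (C ^ 2 * Real.logb 2 x) := by
        rw [mul_pow, Real.sq_sqrt (by positivity)]; ring
    _ ≤ x * (1 / 4 * x) := by gcongr
    _ = (x / 2) ^ 2 := by ring

lemma exists_nat_mul_mul_le_and_le_mul_logb {D : ℕ} (hD : 0 < D) {x w : ℝ} (hx : 2 ≤ x)
    (hw : w = √(x * Real.logb 2 x)) (hDw : 2 * D * w ≤ x / 2) :
    ∃ p r : ℕ, 0 < p ∧ w ≤ p ∧ D * p * r + 1 ≤ x ∧ w / (16 * D) ≤ r * Real.logb 2 p := by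
  have hlog : 1 ≤ Real.logb 2 x :=
    (Real.le_logb_iff_rpow_le (by norm_num) (by linarith)).2 (by simpa using hx)
  have hw0 : 0 ≤ w := hw ▸ Real.sqrt_nonneg _
  have hwsq : w ^ 2 = x * Real.logb 2 x := by rw [hw, Real.sq_sqrt (by positivity)]
  have hxw : x ≤ w ^ 2 := by nlinarith
  have hw1 : 1 ≤ w := by nlinarith
  have : (0 : ℝ) < D := mod_cast hD
  set p := ⌈w⌉₊
  have hwp : w ≤ p := Nat.le_ceil w
  have hp2w : (p : ℝ) ≤ 2 * w := by linarith [Nat.ceil_lt_add_one hw0]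
  have hp : (0 : ℝ) < p := by linarith
  have hlogp : Real.logb 2 x / 2 ≤ Real.logb 2 p := by
    have : Real.logb 2 x ≤ Real.logb 2 ((p : ℝ) ^ 2) :=
      Real.logb_le_logb_of_le (by norm_num) (by linarith) (hxw.trans (by gcongr))
    rw [Real.logb_pow] at this
    push_cast at this
    linarith
  have hDp : D * p ≤ x / 2 := by nlinarith
  set q := (x - 1) / (D * p)
  have hq : x / (4 * D * w) ≤ q := by
    calc x / (4 * D * w) = (x / 2) / (D * (2 * w)) := by field_simp; norm_num
      _ ≤ q := by unfold q; gcongr <;> linarith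
  have hq1 : 1 ≤ q := (one_le_div (by positivity)).2 (by linarith)
  have hqr : q / 2 ≤ ⌊q⌋₊ := by
    have : (1 : ℝ) ≤ ⌊q⌋₊ := mod_cast Nat.le_floor (by simpa using hq1)
    linarith [Nat.lt_floor_add_one q]
  refine ⟨p, ⌊q⌋₊, mod_cast hp, hwp, ?_, ?_⟩
  · have : D * p * q = x - 1 := by unfold q; field_simp
    have : D * p * (⌊q⌋₊ : ℝ) ≤ D * p * q := by gcongr; exact Nat.floor_le (by linarith)
    linarith
  · calc w / (16 * D) = w ^ 2 / (16 * D * w) := by field_simp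
      _ = x / (4 * D * w) / 2 * (Real.logb 2 x / 2) := by rw [hwsq]; field_simp; norm_num
      _ ≤ ⌊q⌋₊ * Real.logb 2 p := by gcongr; linarith

end Parameters

lemma ForcesCograph.exists_rpow_div_le_card {V : Type} {G : SimpleGraph V} {D : ℕ} (hD : 0 < D)
    (hG : ∀ p r, 0 < p → ForcesCograph G (2 ^ (D * p * r + 1)) (min (2 ^ p) (p ^ r)))
    {U : Finset V} {x w : ℝ} (hxU : x = Real.logb 2 #U) (hx : 2 ≤ x)
    (hw : w = √(x * Real.logb 2 x)) (hDw : 2 * D * w ≤ x / 2) :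
    ∃ S ⊆ U, IsCograph (G.induce (S : Set V)) ∧ (2 : ℝ) ^ (w / (16 * D)) ≤ #S := by
  obtain ⟨p, r, hp, hwp, hsize, hrp⟩ := exists_nat_mul_mul_le_and_le_mul_logb hD hx hw hDw
  have hU : (0 : ℝ) < #U := by
    refine (Nat.cast_nonneg _).lt_of_ne fun h => ?_
    rw [← h, Real.logb_zero] at hxU
    linarith
  have hpowU : 2 ^ (D * p * r + 1) ≤ #U := by
    rw [hxU, Real.le_logb_iff_rpow_le (by norm_num) hU] at hsize
    exact_mod_cast hsize
  obtain ⟨S, hSU, hcard, hS⟩ := hG p r hp _ hpowU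
  refine ⟨S, hSU, hS, le_trans ?_ (Nat.cast_le.2 hcard)⟩
  push_cast
  have hw0 : 0 ≤ w := hw ▸ Real.sqrt_nonneg _
  have hD1 : (1 : ℝ) ≤ D := mod_cast hD
  refine le_min ?_ ?_
  · rw [← Real.rpow_natCast]
    refine Real.rpow_le_rpow_of_exponent_le (by norm_num) (le_trans ?_ hwp)
    exact div_le_self hw0 (by linarith)
  · have : (0 : ℝ) < p := mod_cast hp
    rw [← Real.le_logb_iff_rpow_le (by norm_num) (by positivity), Real.logb_pow]
    exact hrp

lemma exists_pos_forall_rpow_sqrt_le_card_of_forcesCograph {D : ℕ} (hD : 0 < D) :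
    ∃ κ : ℝ, 0 < κ ∧ ∀ {V : Type} {G : SimpleGraph V},
      (∀ p r, 0 < p → ForcesCograph G (2 ^ (D * p * r + 1)) (min (2 ^ p) (p ^ r))) →
      ∀ U : Finset V, 2 ≤ #U → ∃ S ⊆ U, IsCograph (G.induce (S : Set V)) ∧
        (2 : ℝ) ^ (κ * √(Real.logb 2 #U * Real.logb 2 (Real.logb 2 #U))) ≤ #S := by
  obtain ⟨X, hX⟩ := eventually_atTop.1
    ((eventually_mul_sqrt_mul_logb_two_le (2 * D)).and (eventually_ge_atTop 2))
  have hX2 : 2 ≤ X := (hX X le_rfl).2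
  refine ⟨min (1 / (16 * D : ℝ)) (1 / X), by positivity, fun {V G} hG U hU => ?_⟩
  have hU2 : (2 : ℝ) ≤ #U := mod_cast hU
  set x := Real.logb 2 #U with hx
  have hx1 : 1 ≤ x :=
    (Real.le_logb_iff_rpow_le (by norm_num) (by linarith)).2 (by simpa using hU2)
  rcases le_total X x with hXx | hxX
  · obtain ⟨S, hSU, hS, hcard⟩ :=
      ForcesCograph.exists_rpow_div_le_card hD hG hx (hX x hXx).2 rfl (hX x hXx).1
    refine ⟨S, hSU, hS, le_trans (Real.rpow_le_rpow_of_exponent_le (by norm_num) ?_) hcard⟩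
    rw [← one_div_mul_eq_div _ √_]
    gcongr
    exact min_le_left _ _
  · obtain ⟨S, hSU, hcard⟩ := Finset.exists_subset_card_eq hU
    refine ⟨S, hSU, isCograph_induce_of_card_lt_four (by lia), ?_⟩
    have hexp : min (1 / (16 * D : ℝ)) (1 / X) * √(x * Real.logb 2 x) ≤ 1 :=
      calc min (1 / (16 * D : ℝ)) (1 / X) * √(x * Real.logb 2 x) ≤ 1 / X * X := by
            gcongr
            · exact min_le_right _ _
            · exact (sqrt_mul_logb_two_le_self hx1).trans hxX
        _ = 1 := by field_simp
    calc (2 : ℝ) ^ (min (1 / (16 * D : ℝ)) (1 / X) * √(x * Real.logb 2 x)) ≤ 2 ^ (1 : ℝ) :=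
          Real.rpow_le_rpow_of_exponent_le (by norm_num) hexp
      _ = #S := by rw [hcard]; norm_num

/-- If a hereditary class `𝓘` satisfies the polynomial density property with parameters
`σ ≥ 0` and `0 < ε ≤ 1`, then there is `κ > 0` such that every `G ∈ 𝓘` on `n ≥ 2`
vertices contains an induced cograph on at least `2 ^ (κ√(log n · log log n))` vertices
(logs base 2). -/
theorem hereditary_density_to_cograph
    (I : ∀ n : ℕ, SimpleGraph (Fin n) → Prop) (hI : Hereditary I)
    (σ ε : ℝ) (hσ : 0 ≤ σ) (hε0 : 0 < ε) (hε1 : ε ≤ 1)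
    (hdens : ∀ (n : ℕ) (G : SimpleGraph (Fin n)), 2 ≤ n → I n G →
      ∀ c : ℝ, 0 ≤ c → c ≤ 1 / 2 →
        ∃ A B : Finset (Fin n), Disjoint A B ∧ A.Nonempty ∧ B.Nonempty ∧
          c ^ σ * n ≤ (A.card : ℝ) ∧ ε * n ≤ (B.card : ℝ) ∧
          ((G.edgeDensity A B : ℝ) ≤ c ∨ 1 - c ≤ (G.edgeDensity A B : ℝ))) :
    ∃ κ : ℝ, 0 < κ ∧
      ∀ (n : ℕ) (G : SimpleGraph (Fin n)), 2 ≤ n → I n G →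
        ∃ s : Finset (Fin n), IsCograph (G.induce (s : Set (Fin n))) ∧
          (2 : ℝ) ^ (κ * Real.sqrt (Real.logb 2 n * Real.logb 2 (Real.logb 2 n))) ≤
            (s.card : ℝ) := by
  obtain ⟨s, hs⟩ := exists_nat_ge σ
  obtain ⟨d, hd⟩ := exists_pow_lt_of_lt_one hε0 (one_half_lt_one (α := ℝ))
  obtain ⟨κ, hκ, hcograph⟩ :=
    exists_pos_forall_rpow_sqrt_le_card_of_forcesCograph (by lia : 0 < 3 * s + d + 2)
  refine ⟨κ, hκ, fun n G hn hG => ?_⟩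
  have hpairs (p : ℕ) :
      HasNearlyPurePairs G (1 / (4 * (2 ^ p : ℕ))) (2 ^ (s * (p + 2))) (2 ^ d) := by
    refine hI.hasNearlyPurePairs (fun m H hm hH => ?_) hG
    obtain ⟨A, B, hAB, -, -, hA, hB, hpure⟩ :=
      hdens m H hm hH ((1 / 2) ^ (p + 2)) (by positivity)
        (pow_le_of_le_one (by norm_num) one_half_lt_one.le (by lia))
    have hc : (1 / 2 : ℝ) ^ (p + 2) = (1 / (4 * (2 ^ p : ℕ)) : ℚ) := by
      rw [one_div_pow, pow_add]; push_cast; ring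
    have hM := pow_mul_le_pow_rpow (by norm_num) one_half_lt_one.le hs (p + 2)
    rw [hc] at hpure
    exact ⟨A, B, hAB, le_mul_of_one_div_le_of_mul_le (by positivity) (by simpa using hM) hA,
      le_mul_of_one_div_le_of_mul_le (by positivity) (by simpa using hd.le) hB,
      mod_cast hpure⟩
  obtain ⟨S, -, hS, hcard⟩ := hcograph
    (fun p r hp => ForcesCograph.two_pow_min_two_pow_pow hp (hpairs p) r) Finset.univ (by simpa)
  exact ⟨S, hS, by simpa using hcard⟩
end
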